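/- Let G be a hyperbolic group and let H ≤ G be a quasiconvex subgroup. Then H is finitely generated and G is autostackable respecting H. In particular, if H is a virtually cyclic subgroup of a hyperbolic group G, then G is autostackable respecting H. -/

import Mathlib

/-!
The idea is to choose normal forms by steepest descent. Write `Γ \ P` for either of the coset spaces
`1 \ H` and `H \ G`, with the level `ℓ` given by the word norm in the first case and by the distance to
`H` in the second. Sending a `g` outside `Γ` to the element of `gP` at distance at most `r` of lowest
level, with ties broken by data depending only on the variation of `ℓ` near `g`, defines a parent
map that is compatible with `Γ`, hence a tree, and the labels of its paths from the root are normal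
forms for `Γ \ P`. Quasiconvexity of `H` enters twice: it makes the descent from an element of `H`
possible inside `H` (`HypNorm.level_bot`), and it gives a four-point condition with the
distance to `H` as the distance to one of the points (`HypNorm.level_top`, through nearest-point
projections). Both cases are then instances of one notion, `Level`.

Two consequences of hyperbolicity drive the construction. The variation of `ℓ` on a large ball around
`g` and the position of `Γ` near `g` form a finite state determining the edges of the tree that leave
`g` and the states at their ends (`Level.propagate`, a version of the finiteness of cone types), so
the normal forms are a regular language. And, far from `Γ`, the paths from `g` and from `g * a` to the
root contain vertices, a bounded number of steps up, which are at distance at most `K`, although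
the letters `a` range over the whole ball of radius `K` (`Level.contract`): the step length `r` is
taken larger than the hyperbolicity and quasiconvexity constants, and `K` larger than `r`, so
climbing contracts the distance back below `K`. The result is packaged as `Tree` in `Level.exists_tree`.

With the ball of radius `K` as alphabet and the products of normal forms for `1 \ H` and `H \ G` as
normal forms, the stacking function replaces an edge off the tree by the detour descending a bounded
number of steps, crossing by a single letter and climbing back; near `H` the crossing
happens inside `H`, along a normal form of `H`. The new crossing edges are closer to the root, or lie
in `H`, so they have smaller complexity (`cpx`, `detour_spec`) and there is no infinite sequence of
replacements. The detour depends only on the letter and a finite state, so the graph of the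
stacking function is synchronously regular (`syncRegular_graph`); the state and the suffixes for
`H \ G` depend only on the coset, which gives translation invariance (`stackFn_outside`).

A virtually cyclic subgroup is quasiconvex by `HypNorm.vcyc_qc`: if it is infinite then, by
finiteness of balls, a conjugate of a power of a generator moves the identity far and nearly along a
geodesic, so its powers are quasigeodesic and stay close to geodesics.
-/


/-- Evaluation of a word over an alphabet `α` in a monoid `G` via a letter map `π`. -/
def wordVal {G : Type} [Monoid G] {α : Type} (π : α → G) (w : List α) : G :=
  (w.map π).prod

/-- A language is prefix-closed if it contains every prefix of each of its words. -/
def PrefixClosed {α : Type} (N : Set (List α)) : Prop :=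
  ∀ w ∈ N, ∀ p : List α, p <+: w → p ∈ N

/-- `(α, π, inv)` is a finite inverse-closed generating set for the group `G`:
no letter represents the identity, `inv` is an involution with `π (inv a) = (π a)⁻¹`,
and the letters generate `G`. -/
structure IsInvGenSet (G : Type) [Group G] {α : Type} (π : α → G) (inv : α → α) : Prop where
  ne_one : ∀ a, π a ≠ 1
  inv_invol : ∀ a, inv (inv a) = a
  val_inv : ∀ a, π (inv a) = (π a)⁻¹
  gen : Subgroup.closure (Set.range π) = ⊤

/-- A language over `α` is regular if it is accepted by a finite state automaton. -/
def IsRegularLang {α : Type} (L : Set (List α)) : Prop :=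
  ∃ (σ : Type) (_ : Fintype σ) (M : DFA α σ), M.accepts = L

/-- The padded word over `(α ∪ {$})²` corresponding to a pair of words;
`none` plays the role of the padding symbol `$`. -/
def padWord2 {α : Type} (p : List α × List α) : List (Option α × Option α) :=
  (List.range (max p.1.length p.2.length)).map (fun i => (p.1[i]?, p.2[i]?))

/-- Synchronous regularity of a set of pairs of words. -/
def SyncRegular2 {α : Type} (L : Set (List α × List α)) : Prop :=
  IsRegularLang (padWord2 '' L)

/-- The padded word over `(α ∪ {$})³` corresponding to a triple of words. -/
def padWord3 {α : Type} (p : List α × List α × List α) :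
    List (Option α × Option α × Option α) :=
  (List.range (max p.1.length (max p.2.1.length p.2.2.length))).map
    (fun i => (p.1[i]?, p.2.1[i]?, p.2.2[i]?))

/-- Synchronous regularity of a set of triples of words. -/
def SyncRegular3 {α : Type} (L : Set (List α × List α × List α)) : Prop :=
  IsRegularLang (padWord3 '' L)

structure StackingData (α : Type) where
  N : Set (List α)
  K : ℕ
  phi : List α → α → List α

/-- `st` is a stackable structure for `G` over the finite inverse-closed generating
set `(α, π, inv)`. -/
structure IsStacking (G : Type) [Group G] {α : Type} (π : α → G) (inv : α → α)
    (st : StackingData α) : Prop where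
  gen : IsInvGenSet G π inv
  nf : ∀ g : G, ∃! w, w ∈ st.N ∧ wordVal π w = g
  prefixClosed : PrefixClosed st.N
  F1 : ∀ y ∈ st.N, ∀ a : α, wordVal π (st.phi y a) = π a ∧ (st.phi y a).length ≤ st.K
  F2 : ∀ y ∈ st.N, ∀ a : α, (y ++ [a] ∈ st.N ∨ ∃ y', y = y' ++ [inv a]) → st.phi y a = [a]
  F3 : ¬ ∃ seq : ℕ → List α × α,
      ∀ i : ℕ, (seq i).1 ∈ st.N ∧ (seq i).1 ++ [(seq i).2] ∉ st.N ∧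
        (¬ ∃ y', (seq i).1 = y' ++ [inv (seq i).2]) ∧
        ∃ u u' : List α, st.phi (seq i).1 (seq i).2 = u ++ (seq (i+1)).2 :: u' ∧
          (seq (i+1)).1 ∈ st.N ∧
          wordVal π ((seq (i+1)).1) = wordVal π ((seq i).1 ++ u)

/-- The regularity conditions making a stackable structure autostackable:
the set of normal forms is regular and the graph of the stacking function is
synchronously regular. -/
def StackingData.IsAuto {α : Type} (st : StackingData α) : Prop :=
  IsRegularLang st.N ∧
  SyncRegular3 {t : List α × List α × List α | ∃ y ∈ st.N, ∃ a : α, t = (y, [a], st.phi y a)}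

/-- The stacking structure `st` respects the subgroup `H`. -/
def RespectsSubgroup {G : Type} [Group G] {α : Type} (π : α → G) (inv : α → α)
    (st : StackingData α) (H : Subgroup G) : Prop :=
  ∃ B : Set α,
    (∀ b ∈ B, inv b ∈ B) ∧
    (∀ b ∈ B, π b ∈ H) ∧
    Subgroup.closure (π '' B) = H ∧
    ∃ NH NTr : Set (List α),
      (∀ w ∈ NH, ∀ b ∈ w, b ∈ B) ∧
      PrefixClosed NH ∧
      (∀ h : G, h ∈ H → ∃! w, w ∈ NH ∧ wordVal π w = h) ∧
      PrefixClosed NTr ∧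
      (∀ g : G, ∃! w, w ∈ NTr ∧ wordVal π w * g⁻¹ ∈ H) ∧
      st.N = {w | ∃ u ∈ NH, ∃ v ∈ NTr, w = u ++ v} ∧
      (∀ y ∈ st.N, wordVal π y ∈ H → ∀ b ∈ B, ∀ c ∈ st.phi y b, c ∈ B) ∧
      (∀ a : α, ∀ y ∈ st.N, ∀ y' ∈ st.N,
        ¬(wordVal π y ∈ H ∧ a ∈ B) →
        (∃ h ∈ H, wordVal π y' = h * wordVal π y) → st.phi y' a = st.phi y a)

/-- A group is autostackable if it admits an autostackable structure over some
finite inverse-closed generating set. -/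
def Autostackable (G : Type) [Group G] : Prop :=
  ∃ (α : Type) (_ : Fintype α) (π : α → G) (inv : α → α) (st : StackingData α),
    IsStacking G π inv st ∧ st.IsAuto

/-- A group is stackable if it admits a stackable structure over some
finite inverse-closed generating set. -/
def Stackable (G : Type) [Group G] : Prop :=
  ∃ (α : Type) (_ : Fintype α) (π : α → G) (inv : α → α) (st : StackingData α),
    IsStacking G π inv st

/-- `G` is autostackable respecting the subgroup `H`. -/
def AutostackableRespecting (G : Type) [Group G] (H : Subgroup G) : Prop :=
  ∃ (α : Type) (_ : Fintype α) (π : α → G) (inv : α → α) (st : StackingData α),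
    IsStacking G π inv st ∧ st.IsAuto ∧ RespectsSubgroup π inv st H

/-- `G` is stackable respecting the subgroup `H`. -/
def StackableRespecting (G : Type) [Group G] (H : Subgroup G) : Prop :=
  ∃ (α : Type) (_ : Fintype α) (π : α → G) (inv : α → α) (st : StackingData α),
    IsStacking G π inv st ∧ RespectsSubgroup π inv st H

/-- The word metric on `G` with respect to the generating set `(α, π)`. -/
noncomputable def wordDist {G : Type} [Group G] {α : Type} (π : α → G) (g g' : G) : ℕ :=
  sInf {n : ℕ | ∃ w : List α, wordVal π w = g⁻¹ * g' ∧ w.length = n}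

/-- The language `L` satisfies the `H`-coset `K`-fellow traveler property. -/
def CosetFellowTraveler {G : Type} [Group G] {α : Type} (π : α → G) (H : Subgroup G)
    (K : ℕ) (L : Set (List α)) : Prop :=
  ∀ v ∈ L, ∀ w ∈ L, ∀ h ∈ H,
    wordDist π (wordVal π v) (h * wordVal π w) ≤ 1 →
    ∀ i : ℕ, wordDist π (wordVal π (v.take i)) (h * wordVal π (w.take i)) ≤ K

/-- The pair `(G, H)` is strongly coset automatic over the generating set `(α, π, inv)`. -/
def StronglyCosetAutomatic {G : Type} [Group G] {α : Type}
    (π : α → G) (inv : α → α) (H : Subgroup G) : Prop :=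
  IsInvGenSet G π inv ∧
  ∃ (K : ℕ) (L : Set (List α)),
    IsRegularLang L ∧
    (∀ g : G, ∃ w ∈ L, wordVal π w * g⁻¹ ∈ H) ∧
    CosetFellowTraveler π H K L

/-- The pair `(G, H)` is strongly prefix-closed coset automatic over `(α, π, inv)`:
the regular language is in addition prefix-closed and contains exactly one
representative of each right coset of `H` in `G`. -/
def StronglyPrefixClosedCosetAutomatic {G : Type} [Group G] {α : Type}
    (π : α → G) (inv : α → α) (H : Subgroup G) : Prop :=
  IsInvGenSet G π inv ∧
  ∃ (K : ℕ) (L : Set (List α)),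
    IsRegularLang L ∧ PrefixClosed L ∧
    (∀ g : G, ∃! w, w ∈ L ∧ wordVal π w * g⁻¹ ∈ H) ∧
    CosetFellowTraveler π H K L

/-- The Gromov product `(x|y)_w` with respect to the word metric of `(α, π)`. -/
noncomputable def gromovProd {G : Type} [Group G] {α : Type} (π : α → G)
    (w x y : G) : ℝ :=
  ((wordDist π w x : ℝ) + (wordDist π w y : ℝ) - (wordDist π x y : ℝ)) / 2

namespace HypAuto

/-! ### Word norms satisfying the four-point condition -/

/-- The left-invariant distance attached to a norm `nm` on a group. -/
def gd {G : Type} [Group G] (nm : G → ℕ) (x y : G) : ℕ := nm (x⁻¹ * y)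

/-- `nm` is an integral geodesic norm with finite balls on `G`, and the distance `gd nm`
satisfies Gromov's four-point condition, written without division as
`d(x,y) + d(z,w) ≤ max (d(x,z) + d(y,w)) (d(x,w) + d(y,z)) + D`. -/
structure HypNorm {G : Type} [Group G] (nm : G → ℕ) (D : ℕ) : Prop where
  one : nm 1 = 0
  eq_one : ∀ g, nm g = 0 → g = 1
  inv : ∀ g, nm g⁻¹ = nm g
  mul : ∀ g h, nm (g * h) ≤ nm g + nm h
  fin : ∀ n, {g | nm g ≤ n}.Finite
  geo : ∀ g j, j ≤ nm g → ∃ q, nm q = j ∧ nm (q⁻¹ * g) + j = nm g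
  h4 : ∀ x y z w, gd nm x y + gd nm z w ≤
    max (gd nm x z + gd nm y w) (gd nm x w + gd nm y z) + D

section words

variable {G : Type} [Group G] {α : Type}

lemma wordVal_nil (π : α → G) : wordVal π [] = 1 := rfl

lemma wordVal_append (π : α → G) (u v : List α) :
    wordVal π (u ++ v) = wordVal π u * wordVal π v := by
  simp [wordVal]

lemma wordVal_single (π : α → G) (a : α) : wordVal π [a] = π a := by
  simp [wordVal]

lemma wordVal_cons (π : α → G) (a : α) (v : List α) :
    wordVal π (a :: v) = π a * wordVal π v := by
  simp [wordVal]

lemma wordVal_inv {π : α → G} {inv : α → α} (h : ∀ a, π (inv a) = (π a)⁻¹) (w : List α) :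
    wordVal π (w.map inv).reverse = (wordVal π w)⁻¹ := by
  induction w with
  | nil => simp [wordVal]
  | cons a w ih => simp [wordVal_append, wordVal_cons, wordVal_nil, ih, h]

lemma exists_word {π : α → G} {inv : α → α} (hgen : IsInvGenSet G π inv) (g : G) :
    ∃ w, wordVal π w = g := by
  have hg : g ∈ Subgroup.closure (Set.range π) := by rw [hgen.gen]; trivial
  induction hg using Subgroup.closure_induction with
  | mem x hx => obtain ⟨a, rfl⟩ := hx; exact ⟨[a], wordVal_single π a⟩
  | one => exact ⟨[], rfl⟩
  | mul x y _ _ hx hy =>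
    obtain ⟨u, rfl⟩ := hx
    obtain ⟨v, rfl⟩ := hy
    exact ⟨u ++ v, wordVal_append π u v⟩
  | inv x _ hx =>
    obtain ⟨u, rfl⟩ := hx
    exact ⟨_, wordVal_inv hgen.val_inv u⟩

lemma wordDist_eq (π : α → G) (x y : G) : wordDist π x y = wordDist π 1 (x⁻¹ * y) := by
  simp [wordDist]

lemma exists_geod {π : α → G} {inv : α → α} (hgen : IsInvGenSet G π inv) (g : G) :
    ∃ w, wordVal π w = g ∧ w.length = wordDist π 1 g := by
  have : wordDist π 1 g ∈ {n : ℕ | ∃ w : List α, wordVal π w = 1⁻¹ * g ∧ w.length = n} := by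
    apply Nat.sInf_mem
    obtain ⟨w, hw⟩ := exists_word hgen g
    exact ⟨w.length, w, by simpa using hw, rfl⟩
  simpa using this

lemma wordDist_le (π : α → G) (w : List α) : wordDist π 1 (wordVal π w) ≤ w.length :=
  Nat.sInf_le ⟨w, by simp, rfl⟩

/-- The word norm of a hyperbolic group satisfies the integral four-point condition. -/
lemma hypNorm_of_words [Fintype α] {π : α → G} {inv : α → α} (hgen : IsInvGenSet G π inv)
    (hhyp : ∃ δ : ℝ, 0 ≤ δ ∧ ∀ w x y z : G,
      min (gromovProd π w x z) (gromovProd π w y z) - δ ≤ gromovProd π w x y) :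
    ∃ D, HypNorm (wordDist π 1) D := by
  obtain ⟨δ, hδ, hh⟩ := hhyp
  have hinv' : ∀ g, wordDist π 1 g⁻¹ ≤ wordDist π 1 g := by
    intro g
    obtain ⟨w, hw, hl⟩ := exists_geod hgen g
    have := wordDist_le π (w.map inv).reverse
    rw [wordVal_inv hgen.val_inv, hw] at this
    simpa [hl] using this
  have hinv : ∀ g, wordDist π 1 g⁻¹ = wordDist π 1 g := by
    intro g
    refine le_antisymm (hinv' g) ?_
    simpa using hinv' g⁻¹
  have hmul : ∀ g h, wordDist π 1 (g * h) ≤ wordDist π 1 g + wordDist π 1 h := by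
    intro g h
    obtain ⟨u, hu, hul⟩ := exists_geod hgen g
    obtain ⟨v, hv, hvl⟩ := exists_geod hgen h
    have := wordDist_le π (u ++ v)
    rw [wordVal_append, hu, hv, List.length_append, hul, hvl] at this
    exact this
  refine ⟨⌈2 * δ⌉₊, ⟨?_, ?_, hinv, hmul, ?_, ?_, ?_⟩⟩
  · simpa [wordVal_nil] using wordDist_le π []
  · intro g hg
    obtain ⟨w, hw, hl⟩ := exists_geod hgen g
    rw [hg, List.length_eq_zero_iff] at hl
    subst hl
    exact hw.symm
  · intro n
    refine ((List.finite_length_le α n).image (wordVal π)).subset ?_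
    intro g hg
    obtain ⟨w, hw, hl⟩ := exists_geod hgen g
    exact ⟨w, by simpa [hl] using hg, hw⟩
  · intro g j hj
    obtain ⟨w, hw, hl⟩ := exists_geod hgen g
    have h1 := wordDist_le π (w.take j)
    have h2 := wordDist_le π (w.drop j)
    have h3 : wordVal π (w.take j) * wordVal π (w.drop j) = g := by
      rw [← wordVal_append, List.take_append_drop, hw]
    have h4 : (wordVal π (w.take j))⁻¹ * g = wordVal π (w.drop j) := by
      rw [← h3]; group
    have h5 := hmul (wordVal π (w.take j)) (wordVal π (w.drop j))
    rw [h3] at h5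
    simp only [List.length_take, List.length_drop] at h1 h2
    refine ⟨wordVal π (w.take j), ?_, ?_⟩
    · omega
    · rw [h4]; omega
  · intro x y z w
    have hsymm : ∀ a b : G, wordDist π a b = wordDist π b a := by
      intro a b
      rw [wordDist_eq π a b, wordDist_eq π b a, ← hinv]
      congr 1
      group
    have key := hh w x y z
    have hc := Nat.le_ceil (2 * δ)
    unfold gd
    simp only [← wordDist_eq]
    simp only [gromovProd, hsymm w] at key
    have : ((wordDist π x y + wordDist π z w : ℕ) : ℝ) ≤
        ((max (wordDist π x z + wordDist π y w) (wordDist π x w + wordDist π y z)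
          + ⌈2 * δ⌉₊ : ℕ) : ℝ) := by
      push_cast
      rcases min_choice (((wordDist π x w : ℝ) + wordDist π z w - wordDist π x z) / 2)
        (((wordDist π y w : ℝ) + wordDist π z w - wordDist π y z) / 2) with h | h
      · rw [h] at key
        have := le_max_left ((wordDist π x z : ℝ) + wordDist π y w)
          (wordDist π x w + wordDist π y z)
        linarith
      · rw [h] at key
        have := le_max_right ((wordDist π x z : ℝ) + wordDist π y w)
          (wordDist π x w + wordDist π y z)
        linarith
    exact_mod_cast this

end words

section metric

variable {G : Type} [Group G] {nm : G → ℕ} {D : ℕ}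

lemma HypNorm.gd_self (h : HypNorm nm D) (x : G) : gd nm x x = 0 := by simp [gd, h.one]

lemma HypNorm.gd_comm (h : HypNorm nm D) (x y : G) : gd nm x y = gd nm y x := by
  unfold gd; rw [← h.inv]; congr 1; group

lemma HypNorm.gd_tri (h : HypNorm nm D) (x y z : G) : gd nm x z ≤ gd nm x y + gd nm y z := by
  unfold gd
  have := h.mul (x⁻¹ * y) (y⁻¹ * z)
  rwa [show x⁻¹ * y * (y⁻¹ * z) = x⁻¹ * z by group] at this

lemma gd_left (nm : G → ℕ) (g x y : G) : gd nm (g * x) (g * y) = gd nm x y := by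
  unfold gd; congr 1; group

lemma gd_mul_right (nm : G → ℕ) (x y : G) : gd nm x (x * y) = nm y := by
  unfold gd; congr 1; group

lemma gd_one (nm : G → ℕ) (x : G) : gd nm 1 x = nm x := by simp [gd]

lemma HypNorm.gd_mul_right' (h : HypNorm nm D) (x y : G) : gd nm (x * y) x = nm y := by
  rw [h.gd_comm, gd_mul_right]

lemma HypNorm.geod (h : HypNorm nm D) (x y : G) (j : ℕ) (hj : j ≤ gd nm x y) :
    ∃ q, gd nm x q = j ∧ gd nm q y + j = gd nm x y := by
  obtain ⟨q, h1, h2⟩ := h.geo (x⁻¹ * y) j hj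
  refine ⟨x * q, by rw [gd_mul_right, h1], ?_⟩
  unfold gd at *
  rw [← h2]; congr 2; group

/-- A subset of `G` is `ε`-quasiconvex if every point metrically between two of its points is
`ε`-close to it. -/
def QC (nm : G → ℕ) (S : Set G) (ε : ℕ) : Prop :=
  ∀ x ∈ S, ∀ y ∈ S, ∀ q, gd nm x q + gd nm q y = gd nm x y → ∃ p ∈ S, gd nm q p ≤ ε

/-- Quasiconvexity passes to sets at finite Hausdorff distance. -/
lemma HypNorm.qc_hausdorff (h : HypNorm nm D) {S S' : Set G} {ε F : ℕ} (hS : QC nm S ε)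
    (h1 : ∀ p ∈ S', ∃ q ∈ S, gd nm p q ≤ F) (h2 : ∀ q ∈ S, ∃ p ∈ S', gd nm q p ≤ F) :
    QC nm S' (4 * F + D + ε + F) := by
  intro x hx y hy u hu
  obtain ⟨x', hx', hxx⟩ := h1 x hx
  obtain ⟨y', hy', hyy⟩ := h1 y hy
  -- `q` is the point of a geodesic from `x'` to `y'` at the same distance from `x'` as `u`
  obtain ⟨q, hq1, hq2⟩ := h.geod x' y' (min (gd nm x' u) (gd nm x' y')) (min_le_right _ _)
  obtain ⟨p, hp, hqp⟩ := hS x' hx' y' hy' q (by omega)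
  obtain ⟨p', hp', hpp⟩ := h2 p hp
  refine ⟨p', hp', ?_⟩
  have a1 := h.h4 q u x' y'
  have a2 := h.gd_tri u q p
  have a3 := h.gd_tri u p p'
  have a4 := h.gd_tri x x' u
  have a5 := h.gd_tri x' x u
  have a6 := h.gd_tri u y y'
  have a7 := h.gd_tri x x' y'
  have a8 := h.gd_tri x' x y
  have a9 := h.gd_tri x' y y'
  have a10 := h.gd_tri x y' y
  have := h.gd_comm q u
  have := h.gd_comm x' x
  have := h.gd_comm y' y
  have := h.gd_comm q x'
  have := h.gd_comm u x'
  omega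

end metric

end HypAuto

namespace HypAuto

/-! ### Virtually cyclic subgroups are quasiconvex -/

section cyclic

variable {G : Type} [Group G] {nm : G → ℕ} {D : ℕ}

/-- If the powers of `c` are pairwise distinct, only few of them lie in a given ball. -/
lemma HypNorm.exists_big_power (h : HypNorm nm D) {c : G}
    (hc : Function.Injective (fun n : ℕ => c ^ n)) (L : ℕ) : ∃ m : ℕ, L ≤ nm (c ^ m) := by
  by_contra hcon
  push Not at hcon
  have : Set.range (fun n : ℕ => c ^ n) ⊆ {g | nm g ≤ L} := by
    rintro _ ⟨n, rfl⟩
    exact (hcon n).le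
  exact Set.infinite_range_of_injective hc ((h.fin L).subset this)

/-- Some conjugate of a power of an element of infinite order is almost a translation of large
translation length. On a long geodesic from `1` to `c ^ m`, the first powers of `c` move the
midpoint `x` almost along the geodesic; by finiteness of balls one of them moves it far. -/
lemma HypNorm.exists_lox (h : HypNorm nm D) {c : G}
    (hc : Function.Injective (fun n : ℕ => c ^ n)) (L : ℕ) :
    ∃ i : ℕ, 0 < i ∧ ∃ x : G, L < nm (x⁻¹ * c ^ i * x) ∧
      2 * nm (x⁻¹ * c ^ i * x) ≤ nm (x⁻¹ * c ^ (2 * i) * x) + 7 * D := by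
  obtain ⟨Nb, hNb⟩ : ∃ Nb : ℕ, (h.fin L).toFinset.card < Nb := ⟨_, Nat.lt_succ_self _⟩
  obtain ⟨A, hA⟩ : ∃ A, ∀ i ≤ Nb, nm (c ^ i) ≤ A :=
    ⟨(Finset.range (Nb + 1)).sup (fun i => nm (c ^ i)), fun i hi =>
      Finset.le_sup (f := fun i => nm (c ^ i)) (by simp; omega)⟩
  obtain ⟨m, hm⟩ := h.exists_big_power hc (20 * (A + D + 1))
  obtain ⟨x, hx1, hx2⟩ := h.geo (c ^ m) (nm (c ^ m) / 2) (by omega)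
  -- pigeonhole: one of the first powers moves the midpoint `x` by more than `L`
  obtain ⟨i, hi0, hiN, hiL⟩ : ∃ i, 0 < i ∧ i ≤ Nb ∧ L < nm (x⁻¹ * c ^ i * x) := by
    by_contra hcon
    push Not at hcon
    have hmaps : ∀ i ∈ Finset.Icc 1 Nb, x⁻¹ * c ^ i * x ∈ (h.fin L).toFinset := by
      intro i hi
      rw [Finset.mem_Icc] at hi
      simpa using hcon i hi.1 hi.2
    obtain ⟨i, hi, j, hj, hij, he⟩ :=
      Finset.exists_ne_map_eq_of_card_lt_of_maps_to (by simpa using hNb) hmaps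
    apply hij
    apply hc
    simpa using he
  refine ⟨i, hi0, x, hiL, ?_⟩
  set f := c ^ m with hf
  set c' := c ^ i with hc'
  have hcomm : c' * f = f * c' := by rw [hf, hc', ← pow_add, ← pow_add, add_comm]
  have hcA : nm c' ≤ A := hA i hiN
  have e1 : gd nm 1 x = nm f / 2 := by rw [gd_one, hx1]
  have e2 : gd nm x f + nm f / 2 = nm f := hx2
  have e3 : gd nm 1 f = nm f := gd_one _ _
  have e4 : gd nm 1 c' = nm c' := gd_one _ _
  have e5 : gd nm f (c' * f) = nm c' := by rw [hcomm, gd_mul_right]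
  have e6 : gd nm c' (c' * f) = nm f := gd_mul_right _ _ _
  have e7 : gd nm c' (c' * x) = gd nm 1 x := by
    rw [gd_mul_right, gd_one]
  have e8 : gd nm (c' * x) (c' * f) = gd nm x f := gd_left _ _ _ _
  have e9 : gd nm c' (c' * (c' * x)) = gd nm 1 (c' * x) := by
    rw [gd_mul_right, gd_one]
  have e10 : gd nm (c' * x) (c' * (c' * x)) = gd nm x (c' * x) := gd_left _ _ _ _
  have e11 : nm (x⁻¹ * c' * x) = gd nm x (c' * x) := by unfold gd; congr 1; group
  have e12 : nm (x⁻¹ * c ^ (2 * i) * x) = gd nm x (c' * (c' * x)) := by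
    unfold gd; congr 1; rw [hc', two_mul, pow_add]; group
  rw [e11, e12]
  clear_value c' f
  generalize hy : c' * x = y at *
  generalize hz : c' * y = z at *
  generalize hf' : c' * f = f' at *
  have q1 := h.h4 c' f' y 1
  have q2 := h.h4 1 f' y f
  have q3 := h.h4 x y 1 f
  have q4 := h.h4 1 y c' z
  have q5 := h.h4 1 z c' y
  have t1 := h.gd_tri 1 x z
  have t2 := h.gd_tri 1 z x
  have t3 := h.gd_tri 1 c' y
  have t4 := h.gd_tri c' 1 y
  have t5 := h.gd_tri f f' y
  have t6 := h.gd_tri f' f y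
  rw [h.gd_comm c' 1] at *
  rw [h.gd_comm y 1] at *
  rw [h.gd_comm f' 1] at *
  rw [h.gd_comm x 1] at *
  rw [h.gd_comm f' y] at *
  rw [h.gd_comm f y] at *
  rw [h.gd_comm f' f] at *
  rw [h.gd_comm z y] at *
  rw [h.gd_comm z c'] at *
  rw [h.gd_comm y c'] at *
  rw [h.gd_comm z x] at *
  omega

/-- If `g` is almost a translation of large translation length, the norms of its powers grow
at least linearly. -/
lemma HypNorm.lox_growth (h : HypNorm nm D) {g : G} (h1 : 20 * (D + 1) < nm g)
    (h2 : 2 * nm g ≤ nm (g ^ 2) + 7 * D) (n : ℕ) :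
    nm (g ^ n) + nm g ≤ nm (g ^ (n + 1)) + 8 * D := by
  induction n with
  | zero => simp [h.one]
  | succ n ih =>
    have key := h.h4 1 (g ^ (n + 1)) (g ^ n) (g ^ (n + 2))
    have e1 : gd nm (g ^ n) (g ^ (n + 2)) = nm (g ^ 2) := by rw [pow_add, gd_mul_right]
    have e2 : gd nm (g ^ (n + 1)) (g ^ (n + 2)) = nm g := by
      rw [pow_succ g (n + 1), gd_mul_right]
    have e3 : gd nm (g ^ (n + 1)) (g ^ n) = nm g := by
      rw [pow_succ g n, h.gd_mul_right']
    rw [gd_one, gd_one, gd_one, e1, e2, e3] at key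
    have e4 : n + 1 + 1 = n + 2 := rfl
    rw [e4]
    omega

lemma HypNorm.lox_between (h : HypNorm nm D) {g : G} (h1 : 20 * (D + 1) < nm g)
    (h2 : 2 * nm g ≤ nm (g ^ 2) + 7 * D) (j t : ℕ) :
    nm (g ^ j) + nm (g ^ t) ≤ nm (g ^ (j + t)) + 9 * D := by
  cases t with
  | zero => simp [h.one]
  | succ t =>
    have key := h.h4 1 (g ^ (j + 1)) (g ^ j) (g ^ (j + (t + 1)))
    have e1 : gd nm (g ^ j) (g ^ (j + (t + 1))) = nm (g ^ (t + 1)) := by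
      rw [pow_add, gd_mul_right]
    have e2 : gd nm (g ^ (j + 1)) (g ^ (j + (t + 1))) = nm (g ^ t) := by
      rw [show j + (t + 1) = (j + 1) + t by omega, pow_add g (j + 1), gd_mul_right]
    have e3 : gd nm (g ^ (j + 1)) (g ^ j) = nm g := by
      rw [pow_succ g j, h.gd_mul_right']
    rw [gd_one, gd_one, gd_one, e1, e2, e3] at key
    have g1 := h.lox_growth h1 h2 j
    have g2 := h.lox_growth h1 h2 t
    omega

lemma HypNorm.lox_near (h : HypNorm nm D) {g : G} (h1 : 20 * (D + 1) < nm g)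
    (h2 : 2 * nm g ≤ nm (g ^ 2) + 7 * D) (n : ℕ) (q : G)
    (hq : gd nm 1 q + gd nm q (g ^ n) = gd nm 1 (g ^ n)) :
    ∃ j : ℕ, gd nm q (g ^ j) ≤ nm g + 10 * D := by
  -- the last power whose norm does not exceed that of `q`
  obtain ⟨j, hjn, hj1, hj2⟩ : ∃ j ≤ n, nm (g ^ j) ≤ nm q ∧ nm q ≤ nm (g ^ j) + nm g := by
    rw [gd_one, gd_one] at hq
    clear h1 h2
    induction n with
    | zero => exact ⟨0, le_rfl, by simp [h.one], by simp [h.one] at *; omega⟩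
    | succ n ih =>
      by_contra hcon
      have key : ∀ j ≤ n + 1, nm (g ^ j) ≤ nm q := by
        intro j
        induction j with
        | zero => simp [h.one]
        | succ j ihj =>
          intro hj
          have := ihj (by omega)
          by_contra hlt
          apply hcon
          refine ⟨j, by omega, this, ?_⟩
          have := h.mul (g ^ j) g
          rw [← pow_succ] at this
          omega
      have := key (n + 1) le_rfl
      exact hcon ⟨n + 1, le_rfl, this, by omega⟩
  refine ⟨j, ?_⟩
  obtain ⟨t, rfl⟩ := Nat.exists_eq_add_of_le hjn
  have key := h.h4 q (g ^ j) 1 (g ^ (j + t))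
  have e1 : gd nm (g ^ j) (g ^ (j + t)) = nm (g ^ t) := by rw [pow_add, gd_mul_right]
  have b := h.lox_between h1 h2 j t
  rw [h.gd_comm q 1, h.gd_comm (g ^ j) 1] at key
  rw [gd_one, gd_one] at *
  rw [gd_one, e1] at key
  omega

lemma HypNorm.lox_qc (h : HypNorm nm D) {g : G} (h1 : 20 * (D + 1) < nm g)
    (h2 : 2 * nm g ≤ nm (g ^ 2) + 7 * D) (x : G) :
    QC nm {y | ∃ n : ℤ, y = x * g ^ n} (nm g + 10 * D) := by
  have main : ∀ (a : ℤ) (n : ℕ) (q : G),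
      gd nm (x * g ^ a) q + gd nm q (x * g ^ (a + n)) = gd nm (x * g ^ a) (x * g ^ (a + n)) →
      ∃ p ∈ {y | ∃ n : ℤ, y = x * g ^ n}, gd nm q p ≤ nm g + 10 * D := by
    intro a n q hq
    have hn : x * g ^ (a + n) = (x * g ^ a) * g ^ n := by
      rw [zpow_add, zpow_natCast, mul_assoc]
    obtain ⟨r, rfl⟩ : ∃ r, q = (x * g ^ a) * r := ⟨(x * g ^ a)⁻¹ * q, by group⟩
    rw [hn, gd_mul_right, gd_mul_right, gd_left] at hq
    obtain ⟨j, hj⟩ := h.lox_near h1 h2 n r (by rw [gd_one, gd_one]; exact hq)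
    refine ⟨(x * g ^ a) * g ^ j, ⟨a + j, ?_⟩, by rwa [gd_left]⟩
    rw [zpow_add, zpow_natCast, mul_assoc]
  rintro _ ⟨a, rfl⟩ _ ⟨b, rfl⟩ q hq
  rcases le_total a b with hab | hab
  · obtain ⟨n, hn⟩ := Int.eq_ofNat_of_zero_le (sub_nonneg.2 hab)
    have : b = a + n := by omega
    rw [this] at hq
    exact main a n q hq
  · obtain ⟨n, hn⟩ := Int.eq_ofNat_of_zero_le (sub_nonneg.2 hab)
    have : a = b + n := by omega
    rw [this] at hq
    refine main b n q ?_
    have := h.gd_comm (x * g ^ (b + n : ℤ)) q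
    have := h.gd_comm q (x * g ^ b)
    have := h.gd_comm (x * g ^ (b + n : ℤ)) (x * g ^ b)
    omega

lemma HypNorm.finite_qc (h : HypNorm nm D) {S : Set G} (hS : S.Finite) : ∃ ε, QC nm S ε := by
  obtain ⟨B, hB⟩ := (hS.image nm).bddAbove
  refine ⟨2 * B, fun x hx y hy q hq => ⟨x, hx, ?_⟩⟩
  have h1 := hB ⟨x, hx, rfl⟩
  have h2 := hB ⟨y, hy, rfl⟩
  have h3 := h.gd_tri x 1 y
  rw [gd_one, h.gd_comm x 1, gd_one] at h3
  rw [h.gd_comm]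
  omega

/-- In a hyperbolic group, virtually cyclic subgroups are quasiconvex: an infinite one is at
finite Hausdorff distance from a translate of the powers of an almost translation. -/
lemma HypNorm.vcyc_qc (h : HypNorm nm D) (H : Subgroup G)
    (hH : ∃ C : Subgroup ↥H, IsCyclic ↥C ∧ C.FiniteIndex) : ∃ ε, QC nm (H : Set G) ε := by
  obtain ⟨C, hC, hfi⟩ := hH
  obtain ⟨c, hc⟩ := hC.exists_generator
  -- finitely many right coset representatives of `C` in `H`
  obtain ⟨F, hF⟩ : ∃ F, ∀ x ∈ H, ∃ n : ℤ, nm (((c : H) : G) ^ n * x) ≤ F := by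
    have : Finite (Quotient (QuotientGroup.rightRel C)) := by
      have : Finite (H ⧸ C) := Subgroup.finite_quotient_of_finiteIndex
      exact Finite.of_equiv _ (QuotientGroup.quotientRightRelEquivQuotientLeftRel C).symm
    let rep : Quotient (QuotientGroup.rightRel C) → ℕ := fun q => nm ((Quotient.out q : H) : G)
    obtain ⟨F, hF⟩ := (Set.finite_range rep).bddAbove
    refine ⟨F, fun x hx => ?_⟩
    let q : Quotient (QuotientGroup.rightRel C) := Quotient.mk _ ⟨x, hx⟩
    have hq : QuotientGroup.rightRel C q.out ⟨x, hx⟩ := Quotient.mk_out (s := QuotientGroup.rightRel C) _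
    rw [QuotientGroup.rightRel_apply] at hq
    obtain ⟨n, hn⟩ := Subgroup.mem_zpowers_iff.1 (hc ⟨_, hq⟩)
    refine ⟨-n, ?_⟩
    have hn' : ((c : H) : G) ^ n = x * ((q.out : H) : G)⁻¹ := by
      have := congrArg (fun z : C => ((z : H) : G)) hn
      simpa using this
    have : ((c : H) : G) ^ (-n) * x = ((q.out : H) : G) := by
      rw [zpow_neg, hn']; group
    rw [this]
    exact hF ⟨q, rfl⟩
  set d : G := ((c : H) : G) with hd
  have hdH : d ∈ H := (c : H).2
  by_cases hinj : Function.Injective (fun n : ℕ => d ^ n)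
  · obtain ⟨i, hi, x, hx1, hx2⟩ := h.exists_lox hinj (20 * (D + 1))
    have e : ∀ n : ℤ, x * (x⁻¹ * d ^ i * x) ^ n = d ^ (i * n) * x := by
      intro n
      have h1 := conj_zpow (a := x⁻¹) (b := d ^ i) (i := n)
      rw [inv_inv] at h1
      rw [h1, zpow_mul, zpow_natCast]; group
    have hqc := h.lox_qc hx1 (by
      refine hx2.trans (le_of_eq ?_)
      congr 2
      rw [two_mul, pow_add, pow_two]; group) x
    obtain ⟨B, hB⟩ : ∃ B, ∀ r : ℕ, r < i → nm (d ^ r) ≤ B :=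
      ⟨(Finset.range i).sup (fun r => nm (d ^ r)), fun r hr =>
        Finset.le_sup (f := fun r => nm (d ^ r)) (by simpa using hr)⟩
    refine ⟨_, h.qc_hausdorff (F := F + B + nm x) hqc ?_ ?_⟩
    · intro p hp
      obtain ⟨n, hn⟩ := hF p hp
      have hdm := Int.emod_add_mul_ediv (-n) i
      have hpos := Int.emod_nonneg (-n) (b := (i : ℤ)) (by omega)
      have hlt := Int.emod_lt_of_pos (-n) (b := (i : ℤ)) (by omega)
      obtain ⟨r, hr⟩ := Int.eq_ofNat_of_zero_le hpos
      refine ⟨_, ⟨(-n) / i, rfl⟩, ?_⟩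
      rw [e]
      have b1 : gd nm p (d ^ (-n)) ≤ F := by
        rw [h.gd_comm]; unfold gd
        simpa using hn
      have b2 : gd nm (d ^ (-n)) (d ^ ((i : ℤ) * ((-n) / i))) ≤ B := by
        rw [h.gd_comm]
        have : d ^ (-n) = d ^ ((i : ℤ) * ((-n) / i)) * d ^ r := by
          rw [← zpow_natCast, ← zpow_add]; congr 1; omega
        rw [this, gd_mul_right]
        exact hB r (by omega)
      have b3 := gd_mul_right nm (d ^ ((i : ℤ) * ((-n) / i))) x
      have t1 := h.gd_tri p (d ^ (-n)) (d ^ ((i : ℤ) * ((-n) / i)) * x)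
      have t2 := h.gd_tri (d ^ (-n)) (d ^ ((i : ℤ) * ((-n) / i))) (d ^ ((i : ℤ) * ((-n) / i)) * x)
      omega
    · rintro _ ⟨n, rfl⟩
      rw [e]
      refine ⟨d ^ ((i : ℤ) * n), H.zpow_mem hdH _, ?_⟩
      rw [h.gd_mul_right']
      omega
  · have hfo : IsOfFinOrder d := by
      by_contra hcon
      exact hinj (injective_pow_iff_not_isOfFinOrder.2 hcon)
    have hfin : {z | z ∈ Subgroup.zpowers d}.Finite := finite_zpowers.2 hfo
    apply h.finite_qc
    refine (hfin.mul (h.fin F)).subset ?_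
    intro x hx
    obtain ⟨n, hn⟩ := hF x hx
    refine Set.mem_mul.2 ⟨d ^ (-n), Subgroup.zpow_mem_zpowers d _, d ^ n * x, hn, by group⟩

end cyclic

end HypAuto

namespace HypAuto

/-! ### Level functions on pairs of subgroups -/

/-- The common framework for the two trees of normal forms: `ℓ` is a `Γ`-invariant distance to
`Γ` on `G`, and `P ≥ Γ` is the subgroup whose cosets `Γ \ P` the tree enumerates. The field
`desc` says that one can descend towards `Γ` inside `P`, at the cost of the additive constant `ε`.
The field `hyp` is the four-point condition with `ℓ` as the distance to one of the points; it is
required only for triples inside a ball centred far from `Γ`. -/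
structure Level {G : Type} [Group G] (nm : G → ℕ) (Γ P : Subgroup G) (ℓ : G → ℕ) (ε D : ℕ) :
    Prop where
  le : Γ ≤ P
  inv : ∀ γ ∈ Γ, ∀ g, ℓ (γ * g) = ℓ g
  zero : ∀ g, ℓ g = 0 ↔ g ∈ Γ
  lip : ∀ g y, ℓ (g * y) ≤ ℓ g + nm y
  geo : ∀ z j, j ≤ ℓ z → ∃ q, gd nm q z = j ∧ ℓ q + j = ℓ z
  desc : ∀ g ∈ P, ∀ j ≤ ℓ g, ∃ p ∈ P, gd nm p g ≤ j + ε ∧ ℓ p + j ≤ ℓ g + ε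
  hyp : ∀ M, ∃ R, ∀ g x y z, R ≤ ℓ g → gd nm g x ≤ M → gd nm g y ≤ M → gd nm g z ≤ M →
    ℓ x + gd nm y z ≤ max (ℓ y + gd nm x z) (ℓ z + gd nm x y) + D

section

variable {G : Type} [Group G] {nm : G → ℕ} {D ε : ℕ}

/-- The level function for the normal forms of `H` itself is the norm. -/
lemma HypNorm.level_bot (h : HypNorm nm D) (H : Subgroup G) (hq : QC nm (H : Set G) ε) :
    Level nm ⊥ H nm ε D where
  le := bot_le
  inv := by
    intro γ hγ g
    rw [Subgroup.mem_bot] at hγ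
    simp [hγ]
  zero := by
    intro g
    rw [Subgroup.mem_bot]
    exact ⟨h.eq_one g, fun hg => by rw [hg, h.one]⟩
  lip := h.mul
  geo := by
    intro z j hj
    obtain ⟨q, h1, h2⟩ := h.geod 1 z (nm z - j) (by rw [gd_one]; omega)
    rw [gd_one] at h1 h2
    exact ⟨q, by omega, by omega⟩
  desc := by
    intro g hg j hj
    obtain ⟨q, h1, h2⟩ := h.geod 1 g (nm g - j) (by rw [gd_one]; omega)
    obtain ⟨p, hp, hqp⟩ := hq 1 H.one_mem g hg q (by omega)
    have a1 := h.gd_tri p q g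
    have a2 := h.gd_tri 1 q p
    rw [h.gd_comm p q] at a1
    rw [gd_one] at h1 h2
    rw [gd_one, gd_one] at a2
    exact ⟨p, hp, by omega, by omega⟩
  hyp := by
    intro M
    refine ⟨0, fun g x y z _ _ _ _ => ?_⟩
    have := h.h4 1 x y z
    simp only [gd_one] at this
    exact this

/-- The distance of `g` to the subgroup `H`. -/
noncomputable def distTo (nm : G → ℕ) (H : Subgroup G) (g : G) : ℕ :=
  sInf {n | ∃ e ∈ H, gd nm e g = n}

lemma exists_distTo (nm : G → ℕ) (H : Subgroup G) (g : G) : ∃ e ∈ H, gd nm e g = distTo nm H g :=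
  Nat.sInf_mem (s := {n | ∃ e ∈ H, gd nm e g = n}) ⟨_, 1, H.one_mem, rfl⟩

lemma distTo_le (nm : G → ℕ) {H : Subgroup G} {e : G} (he : e ∈ H) (g : G) :
    distTo nm H g ≤ gd nm e g := Nat.sInf_le ⟨e, he, rfl⟩

/-- A nearest-point projection onto a quasiconvex subgroup lies on the way, up to a constant, to
every other point of the subgroup. -/
lemma HypNorm.proj (h : HypNorm nm D) {H : Subgroup G} (hq : QC nm (H : Set G) ε) {g e e' : G}
    (he : e ∈ H) (he' : e' ∈ H) (hd : gd nm e g = distTo nm H g) :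
    gd nm e g + gd nm e e' ≤ gd nm e' g + (2 * D + 2 * ε + 1) := by
  have hm := distTo_le nm he' g
  by_cases hL : D + ε + 1 ≤ gd nm e e'
  · obtain ⟨m, h1, h2⟩ := h.geod e e' (D + ε + 1) hL
    obtain ⟨p, hp, hmp⟩ := hq e he e' he' m (by omega)
    have a1 := distTo_le nm hp g
    have a2 := h.gd_tri p m g
    have a3 := h.h4 m g e e'
    have := h.gd_comm m p
    have := h.gd_comm m e
    have := h.gd_comm g e
    have := h.gd_comm g e'
    omega
  · omega

/-- Projections to a quasiconvex subgroup of two nearby points far from it are close to each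
other. -/
lemma HypNorm.proj_close (h : HypNorm nm D) {H : Subgroup G} (hq : QC nm (H : Set G) ε)
    {g z e e' : G} (he : e ∈ H) (he' : e' ∈ H) (hd : gd nm e g = distTo nm H g)
    (hd' : gd nm e' z = distTo nm H z)
    (hfar : gd nm g z + 2 * (2 * D + 2 * ε + 1) + D < distTo nm H g) :
    gd nm e e' ≤ 2 * D + 2 * ε + 1 + D := by
  have a1 := h.proj hq he he' hd
  have a2 := h.proj hq he' he hd'
  have a3 := h.h4 e' g e z
  have := h.gd_comm e e'
  have := h.gd_comm g e
  omega

/-- The level function for the transversal of `H` is the distance to `H`. -/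
lemma HypNorm.level_top (h : HypNorm nm D) (H : Subgroup G) (hq : QC nm (H : Set G) ε) :
    Level nm H ⊤ (distTo nm H) 0 (4 * D + 2 * ε + 1) := by
  have hinv : ∀ γ ∈ H, ∀ g, distTo nm H (γ * g) ≤ distTo nm H g := by
    intro γ hγ g
    obtain ⟨e, he, hd⟩ := exists_distTo nm H g
    rw [← hd, ← gd_left nm γ]
    exact distTo_le nm (H.mul_mem hγ he) _
  have hlip : ∀ g z, distTo nm H z ≤ distTo nm H g + gd nm g z := by
    intro g z
    obtain ⟨e, he, hd⟩ := exists_distTo nm H g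
    have := distTo_le nm he z
    have := h.gd_tri e g z
    omega
  have hgeo : ∀ z j, j ≤ distTo nm H z →
      ∃ q, gd nm q z = j ∧ distTo nm H q + j = distTo nm H z := by
    intro z j hj
    obtain ⟨e, he, hd⟩ := exists_distTo nm H z
    obtain ⟨q, h1, h2⟩ := h.geod e z (distTo nm H z - j) (by omega)
    have := distTo_le nm he q
    have := hlip q z
    exact ⟨q, by omega, by omega⟩
  refine ⟨le_top, ?_, ?_, ?_, hgeo, ?_, ?_⟩
  · intro γ hγ g
    refine le_antisymm (hinv γ hγ g) ?_
    simpa using hinv γ⁻¹ (H.inv_mem hγ) (γ * g)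
  · intro g
    obtain ⟨e, he, hd⟩ := exists_distTo nm H g
    constructor
    · intro h0
      rw [h0] at hd
      have := h.eq_one _ hd
      rw [inv_mul_eq_one] at this
      rwa [← this]
    · intro hg
      have := distTo_le nm hg g
      rw [h.gd_self] at this
      omega
  · intro g y
    have := hlip g (g * y)
    rwa [gd_mul_right] at this
  · intro g _ j hj
    obtain ⟨q, h1, h2⟩ := hgeo g j hj
    exact ⟨q, trivial, by omega, by omega⟩
  · intro M
    refine ⟨M + 2 * (2 * D + 2 * ε + 1) + D + 1, fun g x y z hR hx hy hz => ?_⟩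
    obtain ⟨e, he, hd⟩ := exists_distTo nm H g
    have key : ∀ z, gd nm g z ≤ M → gd nm e z ≤ distTo nm H z + (2 * D + 2 * ε + 1 + D) := by
      intro z hz
      obtain ⟨e', he', hd'⟩ := exists_distTo nm H z
      have := h.proj_close hq he he' hd hd' (by omega)
      have := h.gd_tri e e' z
      omega
    have k1 := key y hy
    have k2 := key z hz
    have k3 := distTo_le nm he x
    have := h.h4 e x y z
    omega

/-- Quasiconvexity stated with geodesic words from the identity, in metric form. -/
lemma qc_of_words {α : Type} {π : α → G} {inv : α → α} (hgen : IsInvGenSet G π inv)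
    (H : Subgroup G)
    (hH : ∀ u : List α, u.length = wordDist π 1 (wordVal π u) → wordVal π u ∈ H →
      ∀ p : List α, p <+: u → ∃ e ∈ H, wordDist π (wordVal π p) e ≤ ε) :
    QC (wordDist π 1) (H : Set G) ε := by
  intro x hx y hy q hq
  obtain ⟨u, hu, hul⟩ := exists_geod hgen (x⁻¹ * q)
  obtain ⟨v, hv, hvl⟩ := exists_geod hgen (q⁻¹ * y)
  have huv : wordVal π (u ++ v) = x⁻¹ * y := by
    rw [wordVal_append, hu, hv]; group
  obtain ⟨e, he, hle⟩ := hH (u ++ v) (by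
    rw [huv, List.length_append, hul, hvl]; exact hq)
    (by rw [huv]; exact H.mul_mem (H.inv_mem hx) hy) u (List.prefix_append u v)
  refine ⟨x * e, H.mul_mem hx he, ?_⟩
  rw [wordDist_eq, hu] at hle
  unfold gd
  rwa [show q⁻¹ * (x * e) = (x⁻¹ * q)⁻¹ * e by group]

end

end HypAuto

namespace HypAuto

/-! ### The parent map and its normal forms -/

/-- The generating alphabet: the nontrivial elements of norm at most `K`. -/
abbrev Ltr {G : Type} [Group G] (nm : G → ℕ) (K : ℕ) : Type := {g : G // g ≠ 1 ∧ nm g ≤ K}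

/-- Evaluation of a word over `Ltr nm K`. -/
abbrev ev {G : Type} [Group G] {nm : G → ℕ} {K : ℕ} (w : List (Ltr nm K)) : G :=
  wordVal Subtype.val w

/-- The step from `g` to its parent `g * par g`: an element of `P` of norm at most `r` which
lowers the level of `g` as much as possible. The choice depends only on the variation of the level
around `g`. -/
noncomputable def par {G : Type} [Group G] (nm : G → ℕ) (P : Subgroup G) (ℓ : G → ℕ) (r : ℕ)
    (g : G) : G :=
  Classical.epsilon fun b => b ∈ P ∧ nm b ≤ r ∧
    ∀ b' ∈ P, nm b' ≤ r → ℓ (g * b) ≤ ℓ (g * b')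

/-- `g * a` lies outside `Γ` and has parent `g`. -/
def Step {G : Type} [Group G] {nm : G → ℕ} {K : ℕ} (Γ P : Subgroup G) (ℓ : G → ℕ) (r : ℕ)
    (g : G) (a : Ltr nm K) : Prop :=
  g * a.1 ∉ Γ ∧ par nm P ℓ r (g * a.1) = a.1⁻¹

/-- The words all of whose letters go from a parent to a child: the labels of the paths starting
at the root of the tree defined by the parent map. -/
def NW {G : Type} [Group G] {nm : G → ℕ} {K : ℕ} (Γ P : Subgroup G) (ℓ : G → ℕ) (r : ℕ) :
    Set (List (Ltr nm K)) :=
  {w | ∀ p a, p ++ [a] <+: w → Step Γ P ℓ r (ev p) a}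

/-- `SufR g s` says that the word `s`, read from its first letter, records the labels of the path
from `g` through its ancestors; so `s.reverse` is a suffix of the normal form of `g`. -/
def SufR {G : Type} [Group G] {nm : G → ℕ} {K : ℕ} (Γ P : Subgroup G) (ℓ : G → ℕ) (r : ℕ) :
    G → List (Ltr nm K) → Prop
  | _, [] => True
  | g, a :: s => g ∉ Γ ∧ par nm P ℓ r g = a.1⁻¹ ∧ SufR Γ P ℓ r (g * a.1⁻¹) s

section

variable {G : Type} [Group G] {nm : G → ℕ} {D₀ D ε r K k M R : ℕ} {Γ P : Subgroup G}
  {ℓ : G → ℕ}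

lemma HypNorm.par_spec (h : HypNorm nm D₀) (P : Subgroup G) (ℓ : G → ℕ) (r : ℕ) (g : G) :
    par nm P ℓ r g ∈ P ∧ nm (par nm P ℓ r g) ≤ r ∧
      ∀ b' ∈ P, nm b' ≤ r → ℓ (g * par nm P ℓ r g) ≤ ℓ (g * b') := by
  refine Classical.epsilon_spec (p := fun b => b ∈ P ∧ nm b ≤ r ∧
    ∀ b' ∈ P, nm b' ≤ r → ℓ (g * b) ≤ ℓ (g * b')) ?_
  obtain ⟨b, hb, hmin⟩ := (measure fun b => ℓ (g * b)).wf.has_min {b | b ∈ P ∧ nm b ≤ r}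
    ⟨1, P.one_mem, by simp [h.one]⟩
  exact ⟨b, hb.1, hb.2, fun b' h1 h2 => not_lt.mp (hmin b' ⟨h1, h2⟩)⟩

lemma par_congr {g₁ g₂ : G}
    (h : ∀ b b', nm b ≤ r → nm b' ≤ r → (ℓ (g₁ * b) ≤ ℓ (g₁ * b') ↔ ℓ (g₂ * b) ≤ ℓ (g₂ * b'))) :
    par nm P ℓ r g₁ = par nm P ℓ r g₂ := by
  unfold par
  congr 1
  funext b
  refine propext (and_congr_right fun _ => and_congr_right fun hb => ?_)
  exact forall₃_congr fun b' _ hb' => h b b' hb hb'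

lemma Level.par_inv (L : Level nm Γ P ℓ ε D) {γ : G} (hγ : γ ∈ Γ) (g : G) :
    par nm P ℓ r (γ * g) = par nm P ℓ r g :=
  par_congr fun b b' _ _ => by simp only [mul_assoc, L.inv γ hγ]

lemma Level.pos (L : Level nm Γ P ℓ ε D) {g : G} : 0 < ℓ g ↔ g ∉ Γ := by
  rw [← L.zero, Nat.pos_iff_ne_zero]

/-- The parent is lower; either it lies in `Γ`, or the level drops by nearly `r`. -/
lemma Level.par_drop (h : HypNorm nm D₀) (L : Level nm Γ P ℓ ε D) (hr : 4 * ε + D + 1 ≤ r) {g : G}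
    (hg : g ∈ P) (hΓ : g ∉ Γ) :
    ℓ (g * par nm P ℓ r g) < ℓ g ∧
      (r < ℓ g → ℓ (g * par nm P ℓ r g) + r ≤ ℓ g + 2 * ε) := by
  obtain ⟨-, -, hmin⟩ := h.par_spec P ℓ r g
  have hpos := L.pos.mpr hΓ
  by_cases hl : r < ℓ g
  · obtain ⟨p, hp, h1, h2⟩ := L.desc g hg (r - ε) (by omega)
    have := hmin (g⁻¹ * p) (P.mul_mem (P.inv_mem hg) hp) (by
      rw [h.gd_comm] at h1; unfold gd at h1; omega)
    rw [mul_inv_cancel_left] at this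
    omega
  · obtain ⟨q, h1, h2⟩ := L.geo g (ℓ g) le_rfl
    have hq : q ∈ Γ := (L.zero q).mp (by omega)
    have := hmin (g⁻¹ * q) (P.mul_mem (P.inv_mem hg) (L.le hq)) (by
      rw [h.gd_comm] at h1; unfold gd at h1; omega)
    rw [mul_inv_cancel_left] at this
    omega

lemma nw_nil : ([] : List (Ltr nm K)) ∈ NW Γ P ℓ r := by
  intro p a hp
  simp at hp

lemma nw_pre : PrefixClosed (NW Γ P ℓ r : Set (List (Ltr nm K))) :=
  fun _ hw _ hp q a hq => hw q a (hq.trans hp)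

lemma nw_append {w : List (Ltr nm K)} {a : Ltr nm K} :
    w ++ [a] ∈ NW Γ P ℓ r ↔ w ∈ NW Γ P ℓ r ∧ Step Γ P ℓ r (ev w) a := by
  constructor
  · intro h
    exact ⟨nw_pre _ h _ (List.prefix_append _ _), h w a List.prefix_rfl⟩
  · rintro ⟨h1, h2⟩ p b hp
    rw [List.prefix_concat_iff] at hp
    rcases hp with hp | hp
    · obtain ⟨rfl, hb⟩ := List.append_inj' hp rfl
      simp only [List.cons.injEq, and_true] at hb
      rwa [hb]
    · exact h1 p b hp

lemma nw_mem (h : HypNorm nm D₀) {w : List (Ltr nm K)} (hw : w ∈ NW Γ P ℓ r) :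
    ∀ a ∈ w, a.1 ∈ P := by
  intro a ha
  obtain ⟨s, t, rfl⟩ := List.append_of_mem ha
  have := hw s a ⟨t, by simp⟩
  have h2 := (h.par_spec P ℓ r (ev s * a.1)).1
  rw [this.2] at h2
  exact P.inv_mem_iff.mp h2

lemma ev_mem {Q : Subgroup G} {w : List (Ltr nm K)} (hw : ∀ a ∈ w, a.1 ∈ Q) : ev w ∈ Q := by
  induction w with
  | nil => exact Q.one_mem
  | cons a w ih =>
    rw [ev, wordVal_cons]
    exact Q.mul_mem (hw a (by simp)) (ih fun b hb => hw b (by simp [hb]))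

lemma ev_append (u v : List (Ltr nm K)) : ev (u ++ v) = ev u * ev v := wordVal_append _ u v

lemma ev_concat (u : List (Ltr nm K)) (a : Ltr nm K) : ev (u ++ [a]) = ev u * a.1 := by
  rw [ev_append, ev, ev, wordVal_single]

/-- Every coset of `Γ` in `P` is represented by a word of the tree. -/
lemma Level.nw_exists (h : HypNorm nm D₀) (L : Level nm Γ P ℓ ε D) (hr : 4 * ε + D + 1 ≤ r)
    (hK : r ≤ K) : ∀ n g, ℓ g ≤ n → g ∈ P →
      ∃ w : List (Ltr nm K), w ∈ NW Γ P ℓ r ∧ ev w * g⁻¹ ∈ Γ := by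
  intro n
  induction n with
  | zero =>
    intro g hg hP
    refine ⟨[], nw_nil, ?_⟩
    have := (L.zero g).mp (by omega)
    simpa [wordVal_nil] using this
  | succ n ih =>
    intro g hg hP
    by_cases hΓ : g ∈ Γ
    · exact ⟨[], nw_nil, by simpa [wordVal_nil] using hΓ⟩
    · have hd := (L.par_drop h hr hP hΓ).1
      obtain ⟨hbP, hbr, -⟩ := h.par_spec P ℓ r g
      set b := par nm P ℓ r g with hb
      obtain ⟨w, hw, hwg⟩ := ih (g * b) (by omega) (P.mul_mem hP hbP)
      have hb1 : b ≠ 1 := by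
        intro hb1
        rw [hb1, mul_one] at hd
        exact lt_irrefl _ hd
      have hev : ev w * b⁻¹ = (ev w * (g * b)⁻¹) * g := by group
      refine ⟨w ++ [⟨b⁻¹, by simpa using hb1, by rw [h.inv]; omega⟩], nw_append.mpr ⟨hw, ?_, ?_⟩,
        ?_⟩
      · change ev w * b⁻¹ ∉ Γ
        rw [hev, Γ.mul_mem_cancel_left hwg]
        exact hΓ
      · change par nm P ℓ r (ev w * b⁻¹) = b⁻¹⁻¹
        rw [hev, L.par_inv hwg, inv_inv, hb]
      · rw [ev_concat]
        change ev w * b⁻¹ * g⁻¹ ∈ Γ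
        rw [hev]
        simpa using hwg

lemma Level.nw_unique (L : Level nm Γ P ℓ ε D) (w w' : List (Ltr nm K)) (hw : w ∈ NW Γ P ℓ r)
    (hw' : w' ∈ NW Γ P ℓ r) (hΓ : ev w * (ev w')⁻¹ ∈ Γ) : w = w' := by
  have hnil : ∀ w : List (Ltr nm K), w ∈ NW Γ P ℓ r → ev w ∈ Γ → w = [] := by
    intro w hw hΓ
    rcases List.eq_nil_or_concat w with rfl | ⟨p, a, rfl⟩
    · rfl
    · rw [List.concat_eq_append] at hw hΓ
      rw [ev_concat] at hΓ
      exact absurd hΓ (nw_append.mp hw).2.1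
  induction w using List.reverseRecOn generalizing w' with
  | nil =>
    refine (hnil w' hw' ?_).symm
    simpa [wordVal_nil] using hΓ
  | append_singleton p a ih =>
    rcases List.eq_nil_or_concat w' with rfl | ⟨p', a', rfl⟩
    · exact hnil _ hw (by simpa [wordVal_nil] using hΓ)
    · rw [List.concat_eq_append] at hw' hΓ ⊢
      obtain ⟨h1, -, h2⟩ := nw_append.mp hw
      obtain ⟨h1', -, h2'⟩ := nw_append.mp hw'
      rw [ev_concat, ev_concat] at hΓ
      have ha : a = a' := by
        have : ev p * a.1 = (ev p * a.1 * (ev p' * a'.1)⁻¹) * (ev p' * a'.1) := by group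
        rw [this, L.par_inv hΓ, h2'] at h2
        exact (Subtype.ext (inv_injective h2)).symm
      subst ha
      rw [ih p' h1 h1' (by
        rwa [show ev p * (ev p')⁻¹ = ev p * a.1 * (ev p' * a.1)⁻¹ by group])]

lemma Level.nw_eq_nil (L : Level nm Γ P ℓ ε D) {w : List (Ltr nm K)} (hw : w ∈ NW Γ P ℓ r)
    (hΓ : ev w ∈ Γ) : w = [] :=
  L.nw_unique w [] hw nw_nil (by simpa [wordVal_nil] using hΓ)

/-! ### Ancestors -/

lemma Level.sufR_inv (L : Level nm Γ P ℓ ε D) {γ : G} (hγ : γ ∈ Γ) (s : List (Ltr nm K)) (g : G) :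
    SufR Γ P ℓ r (γ * g) s ↔ SufR Γ P ℓ r g s := by
  induction s generalizing g with
  | nil => exact Iff.rfl
  | cons a s ih =>
    simp only [SufR, L.par_inv hγ, Γ.mul_mem_cancel_left hγ, mul_assoc γ, ih]

lemma sufR_append (s : List (Ltr nm K)) (a : Ltr nm K) (g : G) :
    SufR Γ P ℓ r g (s ++ [a]) ↔ SufR Γ P ℓ r g s ∧ g * (ev s.reverse)⁻¹ ∉ Γ ∧
      par nm P ℓ r (g * (ev s.reverse)⁻¹) = a.1⁻¹ := by
  induction s generalizing g with
  | nil => simp [SufR, wordVal_nil]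
  | cons b s ih =>
    simp only [List.cons_append, SufR, ih, List.reverse_cons, ev_concat, mul_inv_rev, mul_assoc]
    tauto

lemma sufR_suffix {w : List (Ltr nm K)} (hw : w ∈ NW Γ P ℓ r) (s : List (Ltr nm K))
    (hs : SufR Γ P ℓ r (ev w) s) : ∃ x ∈ NW Γ P ℓ r, w = x ++ s.reverse := by
  induction s generalizing w with
  | nil => exact ⟨w, hw, by simp⟩
  | cons a s ih =>
    obtain ⟨h1, h2, h3⟩ := hs
    rcases List.eq_nil_or_concat w with rfl | ⟨p, b, rfl⟩
    · exact absurd Γ.one_mem h1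
    · rw [List.concat_eq_append] at *
      obtain ⟨hp, -, h4⟩ := nw_append.mp hw
      rw [ev_concat] at h2 h3
      have hab : b = a := Subtype.ext (inv_injective (h4.symm.trans h2))
      subst hab
      rw [mul_inv_cancel_right] at h3
      obtain ⟨x, hx, rfl⟩ := ih hp h3
      exact ⟨x, hx, by simp⟩

/-- The whole path from `g` to the root. -/
lemma Level.sufR_root (h : HypNorm nm D₀) (L : Level nm Γ P ℓ ε D) (hr : 4 * ε + D + 1 ≤ r)
    (hK : r ≤ K) {g : G} (hg : g ∈ P) :
    ∃ s : List (Ltr nm K), SufR Γ P ℓ r g s ∧ g * (ev s.reverse)⁻¹ ∈ Γ := by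
  obtain ⟨w, hw, hΓ⟩ := L.nw_exists h hr hK (K := K) (ℓ g) g le_rfl hg
  have hroot : ∀ w : List (Ltr nm K), w ∈ NW Γ P ℓ r → SufR Γ P ℓ r (ev w) w.reverse := by
    intro w hw
    induction w using List.reverseRecOn with
    | nil => exact trivial
    | append_singleton p a ih =>
      obtain ⟨h1, h2⟩ := nw_append.mp hw
      rw [List.reverse_append, List.reverse_singleton, List.singleton_append, ev_concat]
      refine ⟨h2.1, h2.2, ?_⟩
      rw [mul_inv_cancel_right]
      exact ih h1
  refine ⟨w.reverse, ?_, ?_⟩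
  · rw [← L.sufR_inv hΓ, inv_mul_cancel_right]
    exact hroot w hw
  · rw [List.reverse_reverse]
    have := Γ.inv_mem hΓ
    rwa [show (ev w * g⁻¹)⁻¹ = g * (ev w)⁻¹ by group] at this

/-- The constants of the construction: `r` is the length of the steps of the tree, `K` bounds the
letters, `k` is the radius of the ball on which the variation of the level is recorded, and the
four-point condition holds for triples in balls of radius `M` centred at level at least `R`. -/
structure Consts {G : Type} [Group G] (nm : G → ℕ) (ℓ : G → ℕ) (ε D r K k M R : ℕ) : Prop where
  hr : 4 * ε + D + 1 ≤ r
  hK : r + 3 * D + 2 * ε ≤ K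
  hk : r * (2 * K + r + 4) + K ≤ k
  hk' : 2 * D + 2 * ε ≤ k
  hM : 10 * (k + K + r + D + ε) ≤ M
  hR : M ≤ R
  hyp : ∀ g x y z, R ≤ ℓ g → gd nm g x ≤ M → gd nm g y ≤ M → gd nm g z ≤ M →
    ℓ x + gd nm y z ≤ max (ℓ y + gd nm x z) (ℓ z + gd nm x y) + D

/-- Descending through ancestors until the level `lam` is reached. The resulting path stays, up to
the constant `D + 2 * ε`, as short as the drop of the level. -/
lemma Level.cut_aux (h : HypNorm nm D₀) (L : Level nm Γ P ℓ ε D) (C : Consts nm ℓ ε D r K k M R)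
    {g : G} (hR : R ≤ ℓ g) {lam : ℕ} (hlam : ℓ g ≤ lam + 2 * K) (n : ℕ) :
    ∀ s : List (Ltr nm K), SufR Γ P ℓ r g s → g * (ev s.reverse)⁻¹ ∈ P →
      s.length + ℓ (g * (ev s.reverse)⁻¹) ≤ ℓ g →
      ℓ (g * (ev s.reverse)⁻¹) + gd nm (g * (ev s.reverse)⁻¹) g ≤ ℓ g + (D + 2 * ε) →
      lam ≤ ℓ (g * (ev s.reverse)⁻¹) + r → ℓ (g * (ev s.reverse)⁻¹) ≤ lam + n →
      ∃ s' : List (Ltr nm K), SufR Γ P ℓ r g s' ∧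
        s'.length + ℓ (g * (ev s'.reverse)⁻¹) ≤ ℓ g ∧
        ℓ (g * (ev s'.reverse)⁻¹) + gd nm (g * (ev s'.reverse)⁻¹) g ≤ ℓ g + (D + 2 * ε) ∧
        lam ≤ ℓ (g * (ev s'.reverse)⁻¹) + r ∧ ℓ (g * (ev s'.reverse)⁻¹) ≤ lam := by
  induction n with
  | zero =>
    intro s h1 _ h3 h4 h5 h6
    exact ⟨s, h1, h3, h4, h5, h6⟩
  | succ n ih =>
    intro s h1 h2 h3 h4 h5 h6
    by_cases hle : ℓ (g * (ev s.reverse)⁻¹) ≤ lam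
    · exact ⟨s, h1, h3, h4, h5, hle⟩
    set p := g * (ev s.reverse)⁻¹ with hp
    obtain ⟨c1, c2, c3, c4, c5, c6, c7⟩ := C
    have hpΓ : p ∉ Γ := L.pos.mp (by omega)
    obtain ⟨d1, d2⟩ := L.par_drop h c1 h2 hpΓ
    obtain ⟨hbP, hbr, -⟩ := h.par_spec P ℓ r p
    set b := par nm P ℓ r p with hb
    have hb1 : b ≠ 1 := by
      intro hb1
      rw [hb1, mul_one] at d1
      exact lt_irrefl _ d1
    set a : Ltr nm K := ⟨b⁻¹, by simpa using hb1, by rw [h.inv]; omega⟩ with ha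
    have hpa : g * (ev (s ++ [a]).reverse)⁻¹ = p * b := by
      rw [List.reverse_append, List.reverse_singleton, List.singleton_append, ev, wordVal_cons,
        mul_inv_rev, ← mul_assoc, ha]
      simp [hp]
    have e1 := d2 (by omega)
    have e2 := L.lip (p * b) b⁻¹
    rw [mul_inv_cancel_right, h.inv] at e2
    have e3 := gd_mul_right nm p b
    have e4 := h.gd_tri g p (p * b)
    have e5 := h.gd_comm g p
    have e6 := h.gd_comm g (p * b)
    have e7 := h.gd_self g
    have e8 := c7 g p (p * b) g hR (by omega) (by omega) (by omega)
    refine ih (s ++ [a]) ?_ ?_ ?_ ?_ ?_ ?_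
    · rw [sufR_append]
      exact ⟨h1, hpΓ, by simp [ha, ← hb, ← hp]⟩
    · rw [hpa]; exact P.mul_mem h2 hbP
    · rw [hpa, List.length_append, List.length_singleton]; omega
    · rw [hpa]; omega
    · rw [hpa]; omega
    · rw [hpa]; omega

lemma Level.cut (h : HypNorm nm D₀) (L : Level nm Γ P ℓ ε D) (C : Consts nm ℓ ε D r K k M R)
    {g : G} (hg : g ∈ P) (hR : R ≤ ℓ g) {lam : ℕ} (hlam : ℓ g ≤ lam + 2 * K) (hlam' : lam ≤ ℓ g) :
    ∃ s : List (Ltr nm K), SufR Γ P ℓ r g s ∧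
      s.length + ℓ (g * (ev s.reverse)⁻¹) ≤ ℓ g ∧
      ℓ (g * (ev s.reverse)⁻¹) + gd nm (g * (ev s.reverse)⁻¹) g ≤ ℓ g + (D + 2 * ε) ∧
      lam ≤ ℓ (g * (ev s.reverse)⁻¹) + r ∧ ℓ (g * (ev s.reverse)⁻¹) ≤ lam := by
  have h0 : g * (ev ([] : List (Ltr nm K)).reverse)⁻¹ = g := by simp [wordVal_nil]
  refine L.cut_aux h C hR hlam (2 * K) [] trivial ?_ ?_ ?_ ?_ ?_ <;> rw [h0]
  · exact hg
  · simp
  · rw [h.gd_self]; omega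
  · omega
  · exact hlam

/-- Far from `Γ`, the paths from `g` and from `g * a` to the root contain, not far up, two vertices
at distance at most `K`: this is where hyperbolicity makes a bounded stacking possible. -/
lemma Level.contract (h : HypNorm nm D₀) (L : Level nm Γ P ℓ ε D) (C : Consts nm ℓ ε D r K k M R)
    {g a : G} (hg : g ∈ P) (ha : a ∈ P) (haK : nm a ≤ K) (hR : R + K ≤ ℓ g) :
    ∃ s s' : List (Ltr nm K), SufR Γ P ℓ r g s ∧ SufR Γ P ℓ r (g * a) s' ∧
      s ≠ [] ∧ s.length ≤ 2 * K + r ∧ s'.length ≤ 2 * K + r ∧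
      nm (ev s.reverse * a * (ev s'.reverse)⁻¹) ≤ K := by
  have l1 := L.lip g a
  have l2 := L.lip (g * a) a⁻¹
  rw [mul_inv_cancel_right, h.inv] at l2
  have hKR : 1 ≤ K ∧ K ≤ R := by
    obtain ⟨c1, c2, c3, c4, c5, c6, c7⟩ := C
    omega
  obtain ⟨s, h1, h2, h3, h4, h5⟩ := L.cut h C hg (lam := ℓ g - K) (by omega) (by omega) (by omega)
  obtain ⟨s', h1', h2', h3', h4', h5'⟩ := L.cut h C (P.mul_mem hg ha) (lam := ℓ g - K)
    (by omega) (by omega) (by omega)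
  have hgd : nm (ev s.reverse * a * (ev s'.reverse)⁻¹) =
      gd nm (g * (ev s.reverse)⁻¹) (g * a * (ev s'.reverse)⁻¹) := by
    unfold gd; congr 1; group
  have hs : s ≠ [] := by
    rintro rfl
    simp only [List.reverse_nil, ev, wordVal_nil, inv_one, mul_one] at h5
    omega
  refine ⟨s, s', h1, h1', hs, by omega, by omega, ?_⟩
  rw [hgd]
  have ga := gd_mul_right nm g a
  set q := g * a
  set p' := g * (ev s.reverse)⁻¹
  set q' := q * (ev s'.reverse)⁻¹
  obtain ⟨c1, c2, c3, c4, c5, c6, c7⟩ := C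
  have e1 := h.gd_comm g p'
  have e2 := h.gd_comm q q'
  have e3 := h.gd_tri g q q'
  have e4 := h.gd_self g
  have e5 := h.gd_comm q p'
  have e6 := c7 g g p' q (by omega) (by omega) (by omega) (by omega)
  have e7 := c7 g q p' q' (by omega) (by omega) (by omega) (by omega)
  omega

end

end HypAuto

namespace HypAuto

/-! ### Cone types: finitely many states suffice -/

/-- `g₁` and `g₂` have the same type: the level varies in the same way on the balls of radius `k`
around them, and `Γ` meets the balls of radius `Z` around them in the same places. -/
def Same {G : Type} [Group G] (nm : G → ℕ) (Γ : Subgroup G) (ℓ : G → ℕ) (k Z : ℕ) (g₁ g₂ : G) :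
    Prop :=
  (∀ y, nm y ≤ k → ℓ (g₁ * y) + ℓ g₂ = ℓ (g₂ * y) + ℓ g₁) ∧
    ∀ y, nm y ≤ Z → (g₁ * y ∈ Γ ↔ g₂ * y ∈ Γ)

/-- The type of `g`, as an element of a product of finite sets. -/
def dat {G : Type} [Group G] (nm : G → ℕ) (Γ : Subgroup G) (ℓ : G → ℕ) (k Z : ℕ) (g : G) :
    ({y : G // nm y ≤ k} → ℤ) × ({y : G // nm y ≤ Z} → Prop) :=
  (fun y => (ℓ (g * y.1) : ℤ) - ℓ g, fun y => g * y.1 ∈ Γ)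

/-- What the stacking construction needs to know about a tree of normal forms: `N` is a
set of words, closed under prefixes, over elements of `P` representing each coset of `Γ` in `P` exactly once,
the finite state `F` governs how the words of `N` extend, and for a letter `a` of `P` the state of
`g` provides suffixes `s`, `s'` of the normal forms `w`, `w'` of `g` and `g * a` which together
give a short detour replacing `a`, unless they exhaust `w` and `w'`. -/
structure Tree {G : Type} [Group G] (nm : G → ℕ) (K : ℕ) (Γ P : Subgroup G)
    (N : Set (List (Ltr nm K))) {σ : Type} (F : G → σ)
    (ψ : σ → Ltr nm K → List (Ltr nm K) × List (Ltr nm K)) : Prop where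
  nil : [] ∈ N
  pre : PrefixClosed N
  mem : ∀ w ∈ N, ∀ a ∈ w, a.1 ∈ P
  ex : ∀ g ∈ P, ∃ w ∈ N, ev w * g⁻¹ ∈ Γ
  uniq : ∀ w ∈ N, ∀ w' ∈ N, ev w * (ev w')⁻¹ ∈ Γ → w = w'
  fInv : ∀ γ ∈ Γ, ∀ g, F (γ * g) = F g
  fMem : ∀ g₁ g₂, F g₁ = F g₂ → (g₁ ∈ Γ ↔ g₂ ∈ Γ)
  auto : ∀ w₁ ∈ N, ∀ w₂ ∈ N, F (ev w₁) = F (ev w₂) → ∀ a, w₁ ++ [a] ∈ N →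
    w₂ ++ [a] ∈ N ∧ F (ev (w₁ ++ [a])) = F (ev (w₂ ++ [a]))
  ends : ∀ w₁ ∈ N, ∀ w₂ ∈ N, F (ev w₁) = F (ev w₂) → ∀ x a, w₁ = x ++ [a] → ∃ x', w₂ = x' ++ [a]
  psi : ∀ w ∈ N, ∀ w' ∈ N, ∀ a, a.1 ∈ P → ev w * a.1 * (ev w')⁻¹ ∈ Γ →
    ∃ x x', w = x ++ (ψ (F (ev w)) a).1 ∧ w' = x' ++ (ψ (F (ev w)) a).2 ∧
      (((ψ (F (ev w)) a).1 ≠ [] ∧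
        nm (ev (ψ (F (ev w)) a).1 * a.1 * (ev (ψ (F (ev w)) a).2)⁻¹) ≤ K) ∨ (x = [] ∧ x' = []))

section

variable {G : Type} [Group G] {nm : G → ℕ} {D₀ D ε r K k M R Z : ℕ} {Γ P : Subgroup G}
  {ℓ : G → ℕ}

lemma dat_eq_iff (g₁ g₂ : G) :
    dat nm Γ ℓ k Z g₁ = dat nm Γ ℓ k Z g₂ ↔ Same nm Γ ℓ k Z g₁ g₂ := by
  unfold dat Same
  rw [Prod.mk.injEq, funext_iff, funext_iff, Subtype.forall, Subtype.forall]
  refine and_congr ?_ ?_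
  · refine forall₂_congr fun y _ => ?_
    dsimp only
    omega
  · exact forall₂_congr fun y _ => eq_iff_iff

lemma Level.finite_dat (h : HypNorm nm D₀) (L : Level nm Γ P ℓ ε D) (k Z : ℕ) :
    (Set.range (dat nm Γ ℓ k Z)).Finite := by
  have hk : Finite {y : G // nm y ≤ k} := (h.fin k).to_subtype
  have hZ : Finite {y : G // nm y ≤ Z} := (h.fin Z).to_subtype
  have h1 : (Set.pi Set.univ fun _ : {y : G // nm y ≤ k} => Set.Icc (-(k : ℤ)) k).Finite :=
    Set.Finite.pi fun _ => Set.finite_Icc _ _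
  refine (h1.prod (Set.finite_univ (α := {y : G // nm y ≤ Z} → Prop))).subset ?_
  rintro _ ⟨g, rfl⟩
  refine ⟨fun y _ => ?_, trivial⟩
  have a1 := L.lip g y.1
  have a2 := L.lip (g * y.1) y.1⁻¹
  rw [mul_inv_cancel_right, h.inv] at a2
  have := y.2
  simp only [dat, Set.mem_Icc]
  omega

lemma Same.symm {g₁ g₂ : G} (hs : Same nm Γ ℓ k Z g₁ g₂) : Same nm Γ ℓ k Z g₂ g₁ :=
  ⟨fun y hy => (hs.1 y hy).symm, fun y hy => (hs.2 y hy).symm⟩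

lemma Level.same_inv (L : Level nm Γ P ℓ ε D) {γ : G} (hγ : γ ∈ Γ) (g : G) :
    Same nm Γ ℓ k Z (γ * g) g := by
  refine ⟨fun y _ => ?_, fun y _ => ?_⟩
  · rw [mul_assoc, L.inv γ hγ, L.inv γ hγ]
  · rw [mul_assoc, Γ.mul_mem_cancel_left hγ]

/-- Two elements of the same type either differ by an element of `Γ`, or are both far from `Γ`. -/
lemma Level.same_cases (h : HypNorm nm D₀) (L : Level nm Γ P ℓ ε D) {g₁ g₂ : G}
    (hs : Same nm Γ ℓ k Z g₁ g₂) : (∃ γ ∈ Γ, g₂ = γ * g₁) ∨ (Z < ℓ g₁ ∧ Z < ℓ g₂) := by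
  have key : ∀ g₁ g₂, Same nm Γ ℓ k Z g₁ g₂ → ℓ g₁ ≤ Z → ∃ γ ∈ Γ, g₂ = γ * g₁ := by
    intro g₁ g₂ hs hZ
    obtain ⟨q, h1, h2⟩ := L.geo g₁ (ℓ g₁) le_rfl
    have hq : q ∈ Γ := (L.zero q).mp (by omega)
    have hq2 : g₂ * (g₁⁻¹ * q) ∈ Γ := by
      rw [← hs.2 (g₁⁻¹ * q) (by rw [h.gd_comm] at h1; unfold gd at h1; omega)]
      rwa [mul_inv_cancel_left]
    refine ⟨g₂ * (g₁⁻¹ * q) * q⁻¹, Γ.mul_mem hq2 (Γ.inv_mem hq), by group⟩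
  by_cases h1 : ℓ g₁ ≤ Z
  · exact Or.inl (key g₁ g₂ hs h1)
  by_cases h2 : ℓ g₂ ≤ Z
  · obtain ⟨γ, hγ, he⟩ := key g₂ g₁ hs.symm h2
    exact Or.inl ⟨γ⁻¹, Γ.inv_mem hγ, by rw [he]; group⟩
  · omega

lemma Level.not_mem_of_far (h : HypNorm nm D₀) (L : Level nm Γ P ℓ ε D) {g y : G} (hg : Z < ℓ g)
    (hy : nm y ≤ Z) : g * y ∉ Γ := by
  rw [← L.pos]
  have := L.lip (g * y) y⁻¹
  rw [mul_inv_cancel_right, h.inv] at this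
  omega

lemma Same.par_mul {g₁ g₂ : G} (h : HypNorm nm D₀) (hs : Same nm Γ ℓ k Z g₁ g₂) {u : G}
    (hu : nm u + r ≤ k) : par nm P ℓ r (g₁ * u) = par nm P ℓ r (g₂ * u) := by
  refine par_congr fun b b' hb hb' => ?_
  have a1 := hs.1 (u * b) (by have := h.mul u b; omega)
  have a2 := hs.1 (u * b') (by have := h.mul u b'; omega)
  simp only [← mul_assoc] at a1 a2
  omega

/-- Half of the propagation of types: if `z = g * y` is farther than `k` from `g` then a path of
steepest descent from `z` passes near `g`, so the level of `z` is determined by the type of `g`. -/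
lemma Level.propagate_le (h : HypNorm nm D₀) (L : Level nm Γ P ℓ ε D)
    (C : Consts nm ℓ ε D r K k M R) {g₁ g₂ : G} (hs : Same nm Γ ℓ k Z g₁ g₂) (hR : R ≤ ℓ g₁)
    {b y : G} (hb : nm b ≤ r) (hy : nm y ≤ k) (hdrop : ℓ g₁ + r ≤ ℓ (g₁ * b) + 2 * ε) :
    ℓ (g₂ * (b * y)) + ℓ g₁ ≤ ℓ (g₁ * (b * y)) + ℓ g₂ := by
  by_cases hk : nm (b * y) ≤ k
  · exact (hs.1 (b * y) hk).symm.le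
  obtain ⟨c1, c2, c3, c4, c5, c6, c7⟩ := C
  have e1 := h.mul b y
  have e2 := gd_mul_right nm g₁ b
  have e3 := gd_mul_right nm g₁ (b * y)
  have e4 := gd_mul_right nm (g₁ * b) y
  rw [mul_assoc] at e4
  have e5 := h.gd_self g₁
  have e5' := h.gd_comm (g₁ * b) g₁
  have e6 := c7 g₁ (g₁ * b) g₁ (g₁ * (b * y)) hR (by omega) (by omega) (by omega)
  set z := g₁ * (b * y) with hz
  obtain ⟨q, f1, f2⟩ := L.geo z (nm (b * y)) (by omega)
  have e7 := h.gd_comm q z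
  have e7' := h.gd_comm z g₁
  have e8 := h.gd_tri g₁ z q
  have e9 := c7 g₁ z g₁ q hR (by omega) (by omega) (by omega)
  have e10 := hs.1 (g₁⁻¹ * q) (by unfold gd at e9 e7 e3; unfold gd at *; omega)
  rw [mul_inv_cancel_left] at e10
  have e11 := L.lip (g₂ * (g₁⁻¹ * q)) (q⁻¹ * z)
  rw [show g₂ * (g₁⁻¹ * q) * (q⁻¹ * z) = g₂ * (b * y) by rw [hz]; group] at e11
  unfold gd at f1
  omega

/-- The type of a vertex of the tree and the label of an edge to a child determine the type of the
child. -/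
lemma Level.propagate (h : HypNorm nm D₀) (L : Level nm Γ P ℓ ε D)
    (C : Consts nm ℓ ε D r K k M R) (hZ : R + K ≤ Z) {g₁ g₂ : G} (hg₁ : g₁ ∈ P) (hg₂ : g₂ ∈ P)
    (hs : Same nm Γ ℓ k Z g₁ g₂) {a : Ltr nm K} (haP : a.1 ∈ P) (ha : Step Γ P ℓ r g₁ a) :
    Step Γ P ℓ r g₂ a ∧ Same nm Γ ℓ k Z (g₁ * a.1) (g₂ * a.1) := by
  rcases L.same_cases h hs with ⟨γ, hγ, rfl⟩ | ⟨h1, h2⟩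
  · rw [mul_assoc]
    refine ⟨⟨?_, ?_⟩, (L.same_inv hγ _).symm⟩
    · rw [mul_assoc, Γ.mul_mem_cancel_left hγ]
      exact ha.1
    · rw [mul_assoc, L.par_inv hγ]
      exact ha.2
  have hbr : nm a.1 ≤ r := by
    have := (h.par_spec P ℓ r (g₁ * a.1)).2.1
    rwa [ha.2, h.inv] at this
  have hk1 : r * 4 ≤ k := (Nat.mul_le_mul_left r (by omega)).trans
    ((Nat.le_add_right _ K).trans C.hk)
  obtain ⟨hr, -, -, -, -, -, -⟩ := id C
  have hst : Step Γ P ℓ r g₂ a := by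
    refine ⟨L.not_mem_of_far h h2 (a.2.2.trans (by omega)), ?_⟩
    rw [← ha.2]
    exact (hs.par_mul h (by omega)).symm
  have hdrop : ∀ g ∈ P, Step Γ P ℓ r g a → Z < ℓ g →
      ℓ g + r ≤ ℓ (g * a.1) + 2 * ε ∧ Z < ℓ (g * a.1) := by
    intro g hg hst hgZ
    obtain ⟨d1, d2⟩ := L.par_drop h hr (P.mul_mem hg haP) hst.1
    rw [hst.2, mul_inv_cancel_right] at d1 d2
    obtain ⟨_, c2, c3, c4, c5, c6, c7⟩ := C
    exact ⟨d2 (by omega), by omega⟩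
  obtain ⟨d1, d1'⟩ := hdrop g₁ hg₁ ha h1
  obtain ⟨d2, d2'⟩ := hdrop g₂ hg₂ hst h2
  refine ⟨hst, fun y hy => ?_, fun y hy => ?_⟩
  · have e1 := L.propagate_le h C hs (by omega) hbr hy d1
    have e2 := L.propagate_le h C hs.symm (by omega) hbr hy d2
    have e3 := hs.1 a.1 (by omega)
    rw [mul_assoc, mul_assoc]
    omega
  · exact iff_of_false (L.not_mem_of_far h d1' hy) (L.not_mem_of_far h d2' hy)

lemma Same.sufR {g₁ g₂ : G} (h : HypNorm nm D₀) (hs : Same nm Γ ℓ k Z g₁ g₂)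
    (s : List (Ltr nm K)) (u : G) (hk : nm u + r * (s.length + 1) ≤ k)
    (hZ : nm u + r * (s.length + 1) ≤ Z) (hsuf : SufR Γ P ℓ r (g₁ * u) s) :
    SufR Γ P ℓ r (g₂ * u) s := by
  induction s generalizing u with
  | nil => trivial
  | cons a s ih =>
    obtain ⟨h1, h2, h3⟩ := hsuf
    rw [List.length_cons, mul_add, mul_one] at hk hZ
    have hp := hs.par_mul (P := P) h (u := u) (r := r) (by omega)
    have har : nm a.1⁻¹ ≤ r := by
      rw [← h2]
      exact (h.par_spec P ℓ r (g₁ * u)).2.1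
    have := h.mul u a.1⁻¹
    refine ⟨?_, hp ▸ h2, ?_⟩
    · rw [← hs.2 u (by omega)]
      exact h1
    · rw [mul_assoc] at h3 ⊢
      exact ih (u * a.1⁻¹) (by omega) (by omega) h3

/-- `s` and `s'` are suffixes, read backwards, of the normal forms of `g` and `g * a` that
yield a short detour for the letter `a` or reach the root. -/
def Good (Γ P : Subgroup G) (ℓ : G → ℕ) (r : ℕ) (g : G) (a : Ltr nm K)
    (s s' : List (Ltr nm K)) : Prop :=
  SufR Γ P ℓ r g s ∧ SufR Γ P ℓ r (g * a.1) s' ∧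
    ((s ≠ [] ∧ nm (ev s.reverse * a.1 * (ev s'.reverse)⁻¹) ≤ K) ∨
      (g * (ev s.reverse)⁻¹ ∈ Γ ∧ g * a.1 * (ev s'.reverse)⁻¹ ∈ Γ))

/-- A good pair of suffixes can be chosen uniformly for all elements of a given type. -/
lemma Level.exists_good (h : HypNorm nm D₀) (L : Level nm Γ P ℓ ε D)
    (C : Consts nm ℓ ε D r K k M R) (hZ : R + K ≤ Z) {g : G} (hg : g ∈ P) {a : Ltr nm K}
    (ha : a.1 ∈ P) :
    ∃ s s' : List (Ltr nm K), ∀ g₂, Same nm Γ ℓ k Z g g₂ → Good Γ P ℓ r g₂ a s s' := by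
  have hrK : r ≤ K := by have := C.hK; omega
  by_cases hR : R + K ≤ ℓ g
  · obtain ⟨s, s', h1, h2, h3, h4, h5, h6⟩ := L.contract h C hg ha a.2.2 hR
    obtain ⟨c1, c2, c3, c4, c5, c6, c7⟩ := C
    have k1 : r * (s.length + 1) ≤ r * (2 * K + r + 4) := Nat.mul_le_mul_left r (by omega)
    have k2 : r * (s'.length + 1) + 3 * r ≤ r * (2 * K + r + 4) := by
      rw [mul_comm 3 r, ← mul_add]
      exact Nat.mul_le_mul_left r (by omega)
    have haS : nm a.1 + r * (s'.length + 1) ≤ k := by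
      have haK := a.2.2
      omega
    refine ⟨s, s', fun g₂ hs => ⟨?_, ?_, Or.inl ⟨h3, h6⟩⟩⟩
    · have := hs.sufR h s 1 (P := P) (r := r) (by rw [h.one]; omega) (by rw [h.one]; omega)
        (by rwa [mul_one])
      rwa [mul_one] at this
    · exact hs.sufR h s' a.1 haS (by omega) h2
  · obtain ⟨s, h1, h2⟩ := L.sufR_root h C.hr hrK hg
    obtain ⟨s', h1', h2'⟩ := L.sufR_root h C.hr hrK (P.mul_mem hg ha)
    refine ⟨s, s', fun g₂ hs => ?_⟩
    rcases L.same_cases h hs with ⟨γ, hγ, rfl⟩ | ⟨h3, -⟩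
    · refine ⟨(L.sufR_inv hγ s g).mpr h1, ?_, Or.inr ⟨?_, ?_⟩⟩
      · rw [mul_assoc]
        exact (L.sufR_inv hγ s' _).mpr h1'
      · rw [mul_assoc]
        exact Γ.mul_mem hγ h2
      · rw [mul_assoc, mul_assoc, ← mul_assoc g]
        exact Γ.mul_mem hγ h2'
    · omega

end

end HypAuto

namespace HypAuto

section

variable {G : Type} [Group G] {nm : G → ℕ} {D₀ D ε r K k M R Z : ℕ} {Γ P : Subgroup G}
  {ℓ : G → ℕ}

lemma Level.exists_consts (L : Level nm Γ P ℓ ε D) :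
    ∃ K₀, ∀ K, K₀ ≤ K → ∃ r k M R, Consts nm ℓ ε D r K k M R := by
  refine ⟨4 * ε + D + 1 + 3 * D + 2 * ε, fun K hK => ?_⟩
  obtain ⟨r, hr⟩ : ∃ r, r = 4 * ε + D + 1 := ⟨_, rfl⟩
  obtain ⟨k, hk⟩ : ∃ k, k = r * (2 * K + r + 4) + K + (2 * D + 2 * ε) := ⟨_, rfl⟩
  obtain ⟨M, hM⟩ : ∃ M, M = 10 * (k + K + r + D + ε) := ⟨_, rfl⟩
  obtain ⟨R, hR⟩ := L.hyp M
  exact ⟨r, k, M, max R M, hr.ge, by omega, by omega, by omega, hM.ge, le_max_right _ _,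
    fun g x y z hg => hR g x y z ((le_max_left _ _).trans hg)⟩

/-- Every level function has a tree of normal forms over any large enough ball. -/
theorem Level.exists_tree (h : HypNorm nm D₀) (L : Level nm Γ P ℓ ε D) :
    ∃ K₀, ∀ K, K₀ ≤ K → ∃ (N : Set (List (Ltr nm K))) (σ : Type) (_ : Finite σ) (F : G → σ)
      (ψ : σ → Ltr nm K → List (Ltr nm K) × List (Ltr nm K)), Tree nm K Γ P N F ψ := by
  classical
  obtain ⟨K₀, hK₀⟩ := L.exists_consts
  refine ⟨K₀, fun K hK => ?_⟩
  obtain ⟨r, k, M, R, C⟩ := hK₀ K hK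
  have hrK : r ≤ K := by have := C.hK; omega
  have hrk : r ≤ k := by
    have h1 : r * 1 ≤ r * (2 * K + r + 4) := Nat.mul_le_mul_left r (by omega)
    have := C.hk
    omega
  obtain ⟨Z, hZ⟩ : ∃ Z, Z = R + K + k := ⟨_, rfl⟩
  have hfin := L.finite_dat h k Z
  have hF : ∀ g₁ g₂, (⟨dat nm Γ ℓ k Z g₁, Set.mem_range_self g₁⟩ : Set.range (dat nm Γ ℓ k Z)) =
      ⟨dat nm Γ ℓ k Z g₂, Set.mem_range_self g₂⟩ ↔ Same nm Γ ℓ k Z g₁ g₂ := fun g₁ g₂ => by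
    rw [Subtype.mk.injEq, dat_eq_iff]
  have hψ : ∀ (d : Set.range (dat nm Γ ℓ k Z)) (a : Ltr nm K),
      ∃ s : List (Ltr nm K) × List (Ltr nm K), ∀ g ∈ P, dat nm Γ ℓ k Z g = d.1 → a.1 ∈ P →
        Good Γ P ℓ r g a s.1.reverse s.2.reverse := by
    intro d a
    by_cases hd : ∃ g ∈ P, dat nm Γ ℓ k Z g = d.1 ∧ a.1 ∈ P
    · obtain ⟨g, hg, hgd, ha⟩ := hd
      obtain ⟨s, s', hs⟩ := L.exists_good h C (Z := Z) (by omega) hg ha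
      refine ⟨(s.reverse, s'.reverse), fun g₂ _ hg₂ _ => ?_⟩
      simp only [List.reverse_reverse]
      exact hs g₂ ((dat_eq_iff g g₂).mp (hgd.trans hg₂.symm))
    · exact ⟨([], []), fun g hg hgd ha => absurd ⟨g, hg, hgd, ha⟩ hd⟩
  choose ψ hψ using hψ
  refine ⟨NW Γ P ℓ r, Set.range (dat nm Γ ℓ k Z), hfin.to_subtype,
    fun g => ⟨dat nm Γ ℓ k Z g, Set.mem_range_self g⟩, ψ, ?_⟩
  have hmemP : ∀ w : List (Ltr nm K), w ∈ NW Γ P ℓ r → ev w ∈ P := fun w hw =>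
    ev_mem (nw_mem h hw)
  refine ⟨nw_nil, nw_pre, fun w hw => nw_mem h hw, ?_,
    fun w hw w' hw' => L.nw_unique w w' hw hw', ?_, ?_, ?_, ?_, ?_⟩
  · intro g hg
    exact L.nw_exists h C.hr hrK (ℓ g) g le_rfl hg
  · intro γ hγ g
    exact (hF _ _).mpr (L.same_inv hγ g)
  · intro g₁ g₂ hg
    simpa using ((hF _ _).mp hg).2 1 (by simp [h.one])
  · intro w₁ hw₁ w₂ hw₂ hw a ha
    obtain ⟨-, hst⟩ := nw_append.mp ha
    have haP : a.1 ∈ P := nw_mem h ha a (by simp)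
    obtain ⟨h1, h2⟩ := L.propagate h C (Z := Z) (by omega) (hmemP _ hw₁) (hmemP _ hw₂)
      ((hF _ _).mp hw) haP hst
    refine ⟨nw_append.mpr ⟨hw₂, h1⟩, (hF _ _).mpr ?_⟩
    rwa [ev_concat, ev_concat]
  · rintro _ hw₁ w₂ hw₂ hw x a rfl
    have hs := (hF _ _).mp hw
    obtain ⟨-, hst⟩ := nw_append.mp hw₁
    have hp := hs.par_mul h (u := 1) (P := P) (r := r) (by rw [h.one]; omega)
    have hmem : ev (x ++ [a]) ∈ Γ ↔ ev w₂ ∈ Γ := by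
      simpa using hs.2 1 (by simp [h.one])
    rw [mul_one, mul_one] at hp
    rcases List.eq_nil_or_concat w₂ with rfl | ⟨x', b, rfl⟩
    · rw [ev_concat] at hmem
      exact absurd (hmem.mpr Γ.one_mem) hst.1
    · rw [List.concat_eq_append] at *
      obtain ⟨-, hst'⟩ := nw_append.mp hw₂
      rw [ev_concat, ev_concat, hst.2, hst'.2] at hp
      exact ⟨x', by rw [Subtype.ext (inv_injective hp)]⟩
  · intro w hw w' hw' a ha hΓ
    obtain ⟨h1, h2, h3⟩ := hψ ⟨dat nm Γ ℓ k Z (ev w), Set.mem_range_self _⟩ a (ev w)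
      (hmemP _ hw) rfl ha
    set s := ψ ⟨dat nm Γ ℓ k Z (ev w), Set.mem_range_self _⟩ a
    obtain ⟨x, hx, hwx⟩ := sufR_suffix hw _ h1
    have h2' : SufR Γ P ℓ r (ev w') s.2.reverse := by
      rw [← L.sufR_inv hΓ, inv_mul_cancel_right]
      exact h2
    obtain ⟨x', hx', hwx'⟩ := sufR_suffix hw' _ h2'
    rw [List.reverse_reverse] at hwx hwx'
    refine ⟨x, x', hwx, hwx', ?_⟩
    simp only [List.reverse_reverse] at h3
    rcases h3 with ⟨h3, h4⟩ | ⟨h3, h4⟩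
    · exact Or.inl ⟨fun h0 => h3 (by rw [h0]; rfl), h4⟩
    · refine Or.inr ⟨L.nw_eq_nil hx ?_, L.nw_eq_nil hx' ?_⟩
      · rwa [hwx, ev_append, mul_inv_cancel_right] at h3
      · have h5 : ev w * a.1 * (ev s.2)⁻¹ = (ev w * a.1 * (ev w')⁻¹) * ev x' := by
          rw [hwx', ev_append]; group
        rwa [h5, Γ.mul_mem_cancel_left hΓ] at h4

end

end HypAuto

namespace HypAuto

/-! ### Regular languages -/

section

variable {α : Type}

lemma isRegularLang_iff (L : Set (List α)) : IsRegularLang L ↔ Language.IsRegular (T := α) L :=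
  Iff.rfl

/-- The easy half of the Myhill–Nerode theorem, with a finite-valued invariant of words in place of
a right congruence of finite index. -/
lemma isRegularLang_of_class {L : Set (List α)} {τ : Type} [Finite τ] (c : List α → τ)
    (hc : ∀ w₁ w₂, c w₁ = c w₂ → ∀ u, w₁ ++ u ∈ L → w₂ ++ u ∈ L) : IsRegularLang L := by
  rw [isRegularLang_iff]
  refine Language.IsRegular.of_finite_range_leftQuotient ?_
  have hfac : Function.FactorsThrough (Language.leftQuotient (α := α) L) c := by
    intro w₁ w₂ h
    exact Set.ext fun u => ⟨hc w₁ w₂ h u, hc w₂ w₁ h.symm u⟩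
  rw [Function.factorsThrough_iff] at hfac
  obtain ⟨e, he⟩ := hfac
  rw [he]
  exact (Set.finite_range e).subset (Set.range_comp_subset_range c e)

lemma exists_class {L : Set (List α)} (hL : IsRegularLang L) :
    ∃ (τ : Type) (_ : Finite τ) (c : List α → τ),
      ∀ w₁ w₂, c w₁ = c w₂ → ∀ u, w₁ ++ u ∈ L → w₂ ++ u ∈ L := by
  obtain ⟨τ, hτ, M, rfl⟩ := hL
  refine ⟨τ, inferInstance, M.eval, fun w₁ w₂ h u hu => ?_⟩
  change M.evalFrom M.start (w₁ ++ u) ∈ M.accept at hu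
  change M.evalFrom M.start (w₂ ++ u) ∈ M.accept
  rw [DFA.evalFrom_of_append] at hu ⊢
  change M.evalFrom (M.eval w₂) u ∈ M.accept
  rwa [← h]

lemma isRegularLang_iUnion {ι : Type} [Finite ι] {L : ι → Set (List α)}
    (h : ∀ i, IsRegularLang (L i)) : IsRegularLang (⋃ i, L i) := by
  choose τ hτ c hc using fun i => exists_class (h i)
  refine isRegularLang_of_class (τ := ∀ i, τ i) (fun w i => c i w) fun w₁ w₂ hw u hu => ?_
  rw [Set.mem_iUnion] at *
  obtain ⟨i, hi⟩ := hu
  exact ⟨i, hc i w₁ w₂ (congrFun hw i) u hi⟩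

/-- A prefix-closed language whose one-letter extensions are governed by a finite state is
regular, and so are its parts with prescribed state. -/
lemma isRegularLang_of_state {N : Set (List α)} (hN : PrefixClosed N) {σ : Type} [Finite σ]
    (f : List α → σ)
    (hf : ∀ w₁ ∈ N, ∀ w₂ ∈ N, f w₁ = f w₂ → ∀ a, w₁ ++ [a] ∈ N →
      w₂ ++ [a] ∈ N ∧ f (w₁ ++ [a]) = f (w₂ ++ [a])) (X : Set σ) :
    IsRegularLang {w | w ∈ N ∧ f w ∈ X} := by
  classical
  have key : ∀ u w₁ w₂, w₁ ∈ N → w₂ ∈ N → f w₁ = f w₂ → w₁ ++ u ∈ N →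
      w₂ ++ u ∈ N ∧ f (w₁ ++ u) = f (w₂ ++ u) := by
    intro u
    induction u using List.reverseRecOn with
    | nil => intro w₁ w₂ h1 h2 h3 _; simpa using ⟨h2, h3⟩
    | append_singleton u a ih =>
      intro w₁ w₂ h1 h2 h3 h4
      rw [← List.append_assoc, ← List.append_assoc]
      rw [← List.append_assoc] at h4
      have h5 := hN _ h4 (w₁ ++ u) (List.prefix_append _ _)
      obtain ⟨h6, h7⟩ := ih w₁ w₂ h1 h2 h3 h5
      exact hf _ h5 _ h6 h7 a h4
  refine isRegularLang_of_class (τ := Option σ) (fun w => if w ∈ N then some (f w) else none) ?_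
  rintro w₁ w₂ hw u ⟨hu, hX⟩
  have h1 := hN _ hu w₁ (List.prefix_append _ _)
  by_cases h2 : w₂ ∈ N
  · simp only [h1, h2, if_true, Option.some.injEq] at hw
    obtain ⟨h3, h4⟩ := key u w₁ w₂ h1 h2 hw hu
    exact ⟨h3, h4 ▸ hX⟩
  · simp [h1, h2] at hw

lemma padWord3_length (x c₂ c₃ : List α) :
    (padWord3 (x, c₂, c₃)).length = max x.length (max c₂.length c₃.length) := by
  simp [padWord3]

lemma padWord3_append {x c₂ c₃ : List α} (h₂ : c₂.length ≤ x.length) (h₃ : c₃.length ≤ x.length)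
    (u : List α) :
    padWord3 (x ++ u, c₂, c₃) = padWord3 (x, c₂, c₃) ++ u.map fun a => (some a, none, none) := by
  apply List.ext_getElem
  · simp [padWord3]
    omega
  · intro i h1 h2
    rw [List.getElem_append]
    simp only [padWord3_length, List.length_append] at h1
    by_cases hi : i < x.length
    · rw [dif_pos (by rw [padWord3_length]; omega)]
      simp [padWord3, List.getElem?_append_left hi]
    · rw [dif_neg (by rw [padWord3_length]; omega)]
      have h4 : c₂[i]? = none := by rw [List.getElem?_eq_none_iff]; omega
      have h5 : c₃[i]? = none := by rw [List.getElem?_eq_none_iff]; omega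
      have h6 : max x.length (max c₂.length c₃.length) = x.length := by omega
      simp only [padWord3, List.getElem_map, List.getElem_range, h4, h5, List.length_map,
        List.length_range, h6]
      rw [List.getElem?_append_right (by omega), List.getElem?_eq_getElem (by omega)]

lemma padWord3_inj {x y c₂ c₃ : List α} (h : x.length = y.length)
    (hxy : padWord3 (x, c₂, c₃) = padWord3 (y, c₂, c₃)) : x = y := by
  apply List.ext_getElem?
  intro i
  by_cases hi : i < x.length
  · have h1 := congrArg (fun l => l[i]?) hxy
    simpa [padWord3, List.getElem?_range, hi, h ▸ hi] using h1
  · rw [List.getElem?_eq_none (by omega), List.getElem?_eq_none (by omega)]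

/-- A word having a prefix longer than the two fixed tracks, and which is a padded triple, is
obtained by extending the first track alone. -/
lemma padWord3_split {y c₂ c₃ : List α} {W U : List (Option α × Option α × Option α)}
    (h₂ : c₂.length ≤ W.length) (h₃ : c₃.length ≤ W.length)
    (hW : max c₂.length c₃.length < W.length) (h : W ++ U = padWord3 (y, c₂, c₃)) :
    ∃ x u, y = x ++ u ∧ x.length = W.length ∧ W = padWord3 (x, c₂, c₃) ∧
      U = u.map fun a => (some a, none, none) := by
  have hl := congrArg List.length h
  rw [padWord3_length, List.length_append] at hl
  have hx : (y.take W.length).length = W.length := by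
    rw [List.length_take]; omega
  have hs := padWord3_append (x := y.take W.length) (c₂ := c₂) (c₃ := c₃) (by omega) (by omega)
    (y.drop W.length)
  rw [List.take_append_drop, ← h] at hs
  obtain ⟨e1, e2⟩ := List.append_inj hs (by rw [padWord3_length]; omega)
  exact ⟨_, _, (List.take_append_drop W.length y).symm, hx, e1, e2⟩

/-- Padding the words of a regular language with two fixed tracks gives a regular language. -/
lemma isRegularLang_pad [Finite α] {L : Set (List α)} (hL : IsRegularLang L) (c₂ c₃ : List α) :
    IsRegularLang ((fun y => padWord3 (y, c₂, c₃)) '' L) := by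
  classical
  obtain ⟨τ, hτ, c, hc⟩ := exists_class hL
  set m := max c₂.length c₃.length with hm
  have hfin : Finite {W : List (Option α × Option α × Option α) // W.length ≤ m} :=
    (List.finite_length_le _ m).to_subtype
  let IsPad : List (Option α × Option α × Option α) → Prop := fun W =>
    ∃ x : List α, x.length = W.length ∧ W = padWord3 (x, c₂, c₃)
  refine isRegularLang_of_class
    (τ := {W : List (Option α × Option α × Option α) // W.length ≤ m} ⊕ Option τ)
    (fun W => if h : W.length ≤ m then Sum.inl ⟨W, h⟩
      else Sum.inr (if h : IsPad W then some (c h.choose) else none)) ?_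
  rintro W₁ W₂ hW U ⟨y, hy, hyW⟩
  dsimp only at hW hyW
  by_cases h1 : W₁.length ≤ m
  · by_cases h2 : W₂.length ≤ m
    · simp only [h1, h2, dif_pos, Sum.inl.injEq, Subtype.mk.injEq] at hW
      exact ⟨y, hy, hW ▸ hyW⟩
    · simp [h1, h2] at hW
  · by_cases h2 : W₂.length ≤ m
    · simp [h1, h2] at hW
    · obtain ⟨x, u, rfl, hx, hWx, hU⟩ := padWord3_split (by omega) (by omega)
        (by omega) hyW.symm
      have p1 : IsPad W₁ := ⟨x, hx, hWx⟩
      by_cases p2 : IsPad W₂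
      · simp only [h1, h2, p1, p2, dif_neg, not_false_eq_true, dif_pos, Sum.inr.injEq,
          Option.some.injEq] at hW
        obtain ⟨q1, q2⟩ := p1.choose_spec
        obtain ⟨q3, q4⟩ := p2.choose_spec
        have hxx : p1.choose = x := padWord3_inj (q1.trans hx.symm) (q2.symm.trans hWx)
        rw [hxx] at hW
        refine ⟨p2.choose ++ u, hc _ _ hW u hy, ?_⟩
        dsimp only
        rw [padWord3_append (by omega) (by omega), ← q4, hU]
      · simp [h1, h2, p1, p2] at hW

/-- If the value of `φ` at `(y, a)` is determined by `a` and a finite state of `y` then the graph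
of `φ` is synchronously regular. -/
lemma syncRegular_graph [Finite α] {N : Set (List α)} {σ : Type} [Finite σ] {f : List α → σ}
    (hf : ∀ X : Set σ, IsRegularLang {w | w ∈ N ∧ f w ∈ X}) (Φ : σ → α → List α)
    {φ : List α → α → List α} (hφ : ∀ y ∈ N, ∀ a, φ y a = Φ (f y) a) :
    SyncRegular3 {t : List α × List α × List α | ∃ y ∈ N, ∃ a : α, t = (y, [a], φ y a)} := by
  have := isRegularLang_iUnion (ι := σ × α) fun i =>
    isRegularLang_pad (hf {i.1}) [i.2] (Φ i.1 i.2)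
  unfold SyncRegular3
  convert this using 1
  ext W
  simp only [Set.mem_image, Set.mem_ofPred_eq, Set.mem_iUnion, Set.mem_singleton_iff]
  constructor
  · rintro ⟨_, ⟨y, hy, a, rfl⟩, rfl⟩
    exact ⟨(f y, a), y, ⟨hy, rfl⟩, by rw [hφ y hy a]⟩
  · rintro ⟨⟨s, a⟩, y, ⟨hy, hs⟩, rfl⟩
    refine ⟨_, ⟨y, hy, a, rfl⟩, ?_⟩
    dsimp only at hs ⊢
    rw [hφ y hy a, hs]

end

end HypAuto

namespace HypAuto

/-! ### The combined normal forms -/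

/-- The formal inverse of a letter. -/
def linv {G : Type} [Group G] {nm : G → ℕ} {K : ℕ} (hi : ∀ g, nm g⁻¹ = nm g) (a : Ltr nm K) :
    Ltr nm K :=
  ⟨a.1⁻¹, by simpa using a.2.1, by rw [hi]; exact a.2.2⟩

/-- The concatenation of two languages. -/
def cat {α : Type} (N₁ N₂ : Set (List α)) : Set (List α) :=
  {w | ∃ u ∈ N₁, ∃ v ∈ N₂, w = u ++ v}

section

variable {G : Type} [Group G] {nm : G → ℕ} {D K : ℕ} {H : Subgroup G}
  {NH NT : Set (List (Ltr nm K))} {σH σG : Type} {FH : G → σH} {FG : G → σG}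
  {ψH : σH → Ltr nm K → List (Ltr nm K) × List (Ltr nm K)}
  {ψG : σG → Ltr nm K → List (Ltr nm K) × List (Ltr nm K)}

lemma ev_inv (hi : ∀ g, nm g⁻¹ = nm g) (w : List (Ltr nm K)) :
    ev (w.map (linv hi)).reverse = (ev w)⁻¹ :=
  wordVal_inv (π := (Subtype.val : Ltr nm K → G)) (inv := linv hi) (fun _ => rfl) w

lemma Tree.evH (TH : Tree nm K ⊥ H NH FH ψH) {u : List (Ltr nm K)} (hu : u ∈ NH) : ev u ∈ H :=
  ev_mem (TH.mem u hu)

lemma Tree.evT (TG : Tree nm K H ⊤ NT FG ψG) {v : List (Ltr nm K)} (hv : v ∈ NT) :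
    ev v ∈ H ↔ v = [] := by
  constructor
  · intro h
    exact TG.uniq v hv [] TG.nil (by simpa [wordVal_nil] using h)
  · rintro rfl
    exact H.one_mem

lemma Tree.exH (TH : Tree nm K ⊥ H NH FH ψH) {g : G} (hg : g ∈ H) : ∃ u ∈ NH, ev u = g := by
  obtain ⟨u, hu, h⟩ := TH.ex g hg
  rw [Subgroup.mem_bot, mul_inv_eq_one] at h
  exact ⟨u, hu, h⟩

lemma Tree.uniqH (TH : Tree nm K ⊥ H NH FH ψH) {u u' : List (Ltr nm K)} (hu : u ∈ NH)
    (hu' : u' ∈ NH) (h : ev u = ev u') : u = u' :=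
  TH.uniq u hu u' hu' (by rw [Subgroup.mem_bot, mul_inv_eq_one, h])

lemma cat_mem_iff (TH : Tree nm K ⊥ H NH FH ψH) (TG : Tree nm K H ⊤ NT FG ψG)
    {u v : List (Ltr nm K)} (hu : u ∈ NH) (hv : v ∈ NT) : ev (u ++ v) ∈ H ↔ v = [] := by
  rw [ev_append, H.mul_mem_cancel_left (TH.evH hu), TG.evT hv]

lemma cat_ex (TH : Tree nm K ⊥ H NH FH ψH) (TG : Tree nm K H ⊤ NT FG ψG) (g : G) :
    ∃ u ∈ NH, ∃ v ∈ NT, ev (u ++ v) = g := by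
  obtain ⟨v, hv, h⟩ := TG.ex g trivial
  obtain ⟨u, hu, h'⟩ := TH.exH (H.inv_mem h)
  refine ⟨u, hu, v, hv, ?_⟩
  rw [ev_append, h']
  group

lemma cat_coset (TH : Tree nm K ⊥ H NH FH ψH) (TG : Tree nm K H ⊤ NT FG ψG)
    {u v u' v' : List (Ltr nm K)} (hu : u ∈ NH) (hv : v ∈ NT) (hu' : u' ∈ NH) (hv' : v' ∈ NT)
    (h : ev (u ++ v) * (ev (u' ++ v'))⁻¹ ∈ H) : v = v' := by
  refine TG.uniq v hv v' hv' ?_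
  rw [show ev v * (ev v')⁻¹ = (ev u)⁻¹ * (ev (u ++ v) * (ev (u' ++ v'))⁻¹) * ev u' by
    rw [ev_append, ev_append]; group]
  exact H.mul_mem (H.mul_mem (H.inv_mem (TH.evH hu)) h) (TH.evH hu')

lemma cat_uniq' (TH : Tree nm K ⊥ H NH FH ψH) (TG : Tree nm K H ⊤ NT FG ψG)
    {u v u' v' : List (Ltr nm K)} (hu : u ∈ NH) (hv : v ∈ NT) (hu' : u' ∈ NH) (hv' : v' ∈ NT)
    (h : ev (u ++ v) = ev (u' ++ v')) : u = u' ∧ v = v' := by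
  have hvv : v = v' := cat_coset TH TG hu hv hu' hv' (by rw [h, mul_inv_cancel]; exact H.one_mem)
  subst hvv
  rw [ev_append, ev_append, mul_left_inj] at h
  exact ⟨TH.uniqH hu hu' h, rfl⟩

lemma cat_uniq (TH : Tree nm K ⊥ H NH FH ψH) (TG : Tree nm K H ⊤ NT FG ψG)
    {w w' : List (Ltr nm K)} (hw : w ∈ cat NH NT) (hw' : w' ∈ cat NH NT) (h : ev w = ev w') :
    w = w' := by
  obtain ⟨u, hu, v, hv, rfl⟩ := hw
  obtain ⟨u', hu', v', hv', rfl⟩ := hw'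
  obtain ⟨rfl, rfl⟩ := cat_uniq' TH TG hu hv hu' hv' h
  rfl

lemma cat_pre (TH : Tree nm K ⊥ H NH FH ψH) (TG : Tree nm K H ⊤ NT FG ψG) :
    PrefixClosed (cat NH NT) := by
  rintro _ ⟨u, hu, v, hv, rfl⟩ p ⟨t, ht⟩
  rcases List.append_eq_append_iff.mp ht with ⟨e, rfl, -⟩ | ⟨e, rfl, rfl⟩
  · exact ⟨p, TH.pre _ hu p (List.prefix_append _ _), [], TG.nil, by simp⟩
  · exact ⟨u, hu, e, TG.pre _ hv e (List.prefix_append _ _), rfl⟩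

lemma cat_append (TH : Tree nm K ⊥ H NH FH ψH) (TG : Tree nm K H ⊤ NT FG ψG)
    {u v : List (Ltr nm K)} (hu : u ∈ NH) (hv : v ∈ NT) (a : Ltr nm K) :
    u ++ v ++ [a] ∈ cat NH NT ↔ v ++ [a] ∈ NT ∨ (v = [] ∧ u ++ [a] ∈ NH) := by
  constructor
  · rintro ⟨u', hu', v', hv', h⟩
    rcases List.eq_nil_or_concat v' with rfl | ⟨v'', b, rfl⟩
    · rw [List.append_nil] at h
      have h1 : u ++ v ∈ NH := TH.pre _ hu' _ ⟨[a], h⟩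
      have h2 := (cat_mem_iff TH TG hu hv).mp (TH.evH h1)
      subst h2
      rw [List.append_nil] at h
      exact Or.inr ⟨rfl, h ▸ hu'⟩
    · rw [List.concat_eq_append] at h hv'
      rw [← List.append_assoc] at h
      obtain ⟨h1, h2⟩ := List.append_inj' h rfl
      have h3 := (cat_uniq' TH TG hu hv hu' (TG.pre _ hv' _ (List.prefix_append _ _))
        (congrArg ev h1)).2
      rw [h3, h2]
      exact Or.inl hv'
  · rintro (h | ⟨rfl, h⟩)
    · exact ⟨u, hu, v ++ [a], h, by simp⟩
    · exact ⟨u ++ [a], h, [], TG.nil, by simp⟩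

open Classical in
/-- The state of an element of `G`: the state of its coset, and, for the elements of `H`, the state
in the tree of `H`. -/
noncomputable def stF (H : Subgroup G) (FH : G → σH) (FG : G → σG) (g : G) : σG × Option σH :=
  (FG g, if g ∈ H then some (FH g) else none)

lemma stF_mem {g₁ g₂ : G} (h : stF H FH FG g₁ = stF H FH FG g₂) : g₁ ∈ H ↔ g₂ ∈ H := by
  have := congrArg Prod.snd h
  by_cases h1 : g₁ ∈ H <;> by_cases h2 : g₂ ∈ H <;> simp_all [stF]

lemma Tree.FG_eq (TH : Tree nm K ⊥ H NH FH ψH) (TG : Tree nm K H ⊤ NT FG ψG)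
    {u : List (Ltr nm K)} (hu : u ∈ NH) (v : List (Ltr nm K)) : FG (ev (u ++ v)) = FG (ev v) := by
  rw [ev_append, TG.fInv _ (TH.evH hu)]

lemma cat_auto (TH : Tree nm K ⊥ H NH FH ψH) (TG : Tree nm K H ⊤ NT FG ψG) :
    ∀ w₁ ∈ cat NH NT, ∀ w₂ ∈ cat NH NT, stF H FH FG (ev w₁) = stF H FH FG (ev w₂) →
      ∀ a, w₁ ++ [a] ∈ cat NH NT → w₂ ++ [a] ∈ cat NH NT ∧
        stF H FH FG (ev (w₁ ++ [a])) = stF H FH FG (ev (w₂ ++ [a])) := by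
  rintro _ ⟨u₁, hu₁, v₁, hv₁, rfl⟩ _ ⟨u₂, hu₂, v₂, hv₂, rfl⟩ hF a ha
  have hm := stF_mem hF
  rw [cat_mem_iff TH TG hu₁ hv₁, cat_mem_iff TH TG hu₂ hv₂] at hm
  have hFG : FG (ev v₁) = FG (ev v₂) :=
    (TH.FG_eq TG hu₁ v₁).symm.trans (.trans (congrArg Prod.fst hF) (TH.FG_eq TG hu₂ v₂))
  rw [cat_append TH TG hu₁ hv₁] at ha
  rw [cat_append TH TG hu₂ hv₂]
  rcases ha with ha | ⟨rfl, ha⟩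
  · obtain ⟨h1, h2⟩ := TG.auto v₁ hv₁ v₂ hv₂ hFG a ha
    refine ⟨Or.inl h1, ?_⟩
    have n1 : ev (u₁ ++ (v₁ ++ [a])) ∉ H := by
      rw [cat_mem_iff TH TG hu₁ ha]; simp
    have n2 : ev (u₂ ++ (v₂ ++ [a])) ∉ H := by
      rw [cat_mem_iff TH TG hu₂ h1]; simp
    rw [List.append_assoc, List.append_assoc]
    simp only [stF, if_neg n1, if_neg n2, TH.FG_eq TG hu₁, TH.FG_eq TG hu₂, h2]
  · have hv : v₂ = [] := hm.mp rfl
    subst hv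
    rw [List.append_nil, List.append_nil] at *
    have hFH : FH (ev u₁) = FH (ev u₂) := by
      have := congrArg Prod.snd hF
      simpa [stF, TH.evH hu₁, TH.evH hu₂] using this
    obtain ⟨h1, h2⟩ := TH.auto u₁ hu₁ u₂ hu₂ hFH a ha
    refine ⟨Or.inr ⟨rfl, h1⟩, ?_⟩
    have e1 := TH.FG_eq TG ha []
    have e2 := TH.FG_eq TG h1 []
    rw [List.append_nil] at e1 e2
    simp only [stF, if_pos (TH.evH ha), if_pos (TH.evH h1), h2, e1, e2]

lemma cat_ends (TH : Tree nm K ⊥ H NH FH ψH) (TG : Tree nm K H ⊤ NT FG ψG) :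
    ∀ w₁ ∈ cat NH NT, ∀ w₂ ∈ cat NH NT, stF H FH FG (ev w₁) = stF H FH FG (ev w₂) →
      ∀ x a, w₁ = x ++ [a] → ∃ x', w₂ = x' ++ [a] := by
  rintro _ ⟨u₁, hu₁, v₁, hv₁, rfl⟩ _ ⟨u₂, hu₂, v₂, hv₂, rfl⟩ hF x a hx
  have hm := stF_mem hF
  rw [cat_mem_iff TH TG hu₁ hv₁, cat_mem_iff TH TG hu₂ hv₂] at hm
  have hFG : FG (ev v₁) = FG (ev v₂) :=
    (TH.FG_eq TG hu₁ v₁).symm.trans (.trans (congrArg Prod.fst hF) (TH.FG_eq TG hu₂ v₂))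
  rcases List.eq_nil_or_concat v₁ with rfl | ⟨v', b, rfl⟩
  · have hv : v₂ = [] := hm.mp rfl
    subst hv
    rw [List.append_nil, List.append_nil] at *
    have hFH : FH (ev u₁) = FH (ev u₂) := by
      have := congrArg Prod.snd hF
      simpa [stF, TH.evH hu₁, TH.evH hu₂] using this
    exact TH.ends u₁ hu₁ u₂ hu₂ hFH x a hx
  · rw [List.concat_eq_append] at *
    rw [← List.append_assoc] at hx
    obtain ⟨-, h2⟩ := List.append_inj' hx rfl
    simp only [List.cons.injEq, and_true] at h2
    subst h2
    obtain ⟨x', rfl⟩ := TG.ends _ hv₁ v₂ hv₂ hFG v' b rfl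
    exact ⟨u₂ ++ x', by simp⟩

/-- A letter occurring on the path from `y` down to its ancestor `X`, along `m`, and up again
to `X' ++ s'` traverses an edge of the tree of normal forms unless it occurs in `m`. -/
lemma path_cases (hi : ∀ g, nm g⁻¹ = nm g) (TH : Tree nm K ⊥ H NH FH ψH)
    (TG : Tree nm K H ⊤ NT FG ψG) {X s X' s' m u u' y : List (Ltr nm K)} {a a' : Ltr nm K}
    (hy : X ++ s ∈ cat NH NT) (hy' : X' ++ s' ∈ cat NH NT)
    (hev : ev (X' ++ s') = ev (X ++ s) * a.1) (hm : ev m = ev s * a.1 * (ev s')⁻¹)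
    (hsplit : (s.map (linv hi)).reverse ++ m ++ s' = u ++ a' :: u')
    (hN : y ∈ cat NH NT) (hyu : ev y = ev (X ++ s) * ev u) (h1 : y ++ [a'] ∉ cat NH NT)
    (h2 : ¬ ∃ y', y = y' ++ [linv hi a']) :
    ∃ m₁ m₂, m = m₁ ++ a' :: m₂ ∧ ev y = ev X * ev m₁ := by
  have hinv : ∀ w : List (Ltr nm K), ((w.map (linv hi)).reverse.map (linv hi)).reverse = w := by
    intro w
    have : linv hi ∘ linv hi = (id : Ltr nm K → Ltr nm K) := by
      funext b; exact Subtype.ext (inv_inv b.1)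
    rw [List.map_reverse, List.reverse_reverse, List.map_map, this, List.map_id]
  have hX : ev (X ++ s) * (ev s)⁻¹ = ev X := by rw [ev_append]; group
  -- the ascending part
  have hup : ∀ e t, s' = e ++ a' :: t → u = (s.map (linv hi)).reverse ++ m ++ e → False := by
    intro e t hs' hu
    have hval : ev y = ev (X' ++ e) := by
      rw [hyu, hu, ev_append _ e, ev_append _ m, ev_inv, hm]
      rw [hs', ev_append X'] at hev
      have : ev X' = ev (X ++ s) * a.1 * (ev (e ++ a' :: t))⁻¹ := by rw [← hev]; group
      rw [ev_append X' e, this, hs']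
      group
    rw [hs'] at hy'
    have hp := cat_pre TH TG _ hy'
    have hy2 := cat_uniq TH TG hN (hp (X' ++ e) ⟨a' :: t, by simp⟩) hval
    refine h1 ?_
    rw [hy2]
    exact hp _ ⟨t, by simp⟩
  -- the descending part
  have hdown : ∀ e, (s.map (linv hi)).reverse = u ++ a' :: e → False := by
    intro e he
    have hs : s = (e.map (linv hi)).reverse ++ linv hi a' :: (u.map (linv hi)).reverse := by
      rw [← hinv s, he]
      simp
    have hval : ev y = ev (X ++ ((e.map (linv hi)).reverse ++ [linv hi a'])) := by
      rw [hyu, hs]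
      have : (e.map (linv hi)).reverse ++ linv hi a' :: (u.map (linv hi)).reverse =
          ((e.map (linv hi)).reverse ++ [linv hi a']) ++ (u.map (linv hi)).reverse := by simp
      rw [this, ev_append, ev_append X, ev_append _ (u.map (linv hi)).reverse, ev_inv]
      group
    rw [hs] at hy
    have hy2 := cat_uniq TH TG hN
      (cat_pre TH TG _ hy (X ++ ((e.map (linv hi)).reverse ++ [linv hi a'])) ⟨(u.map (linv hi)).reverse, by simp⟩)
      hval
    exact h2 ⟨X ++ (e.map (linv hi)).reverse, by rw [hy2]; simp⟩
  rw [List.append_assoc] at hsplit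
  have hmid : ∀ c, u = (s.map (linv hi)).reverse ++ c → m ++ s' = c ++ a' :: u' →
      ∃ m₁ m₂, m = m₁ ++ a' :: m₂ ∧ ev y = ev X * ev m₁ := by
    intro c hc hms
    rcases List.append_eq_append_iff.mp hms with ⟨e, he1, he2⟩ | ⟨e, he1, he2⟩
    · exact (hup e u' he2 (by rw [hc, he1, List.append_assoc])).elim
    · cases e with
      | nil =>
        refine (hup [] u' (by simpa using he2.symm) ?_).elim
        rw [hc, he1]; simp
      | cons b e =>
        rw [List.cons_append, List.cons.injEq] at he2
        obtain ⟨rfl, -⟩ := he2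
        refine ⟨c, e, he1, ?_⟩
        rw [hyu, hc, ev_append _ c, ev_inv, ← mul_assoc, hX]
  rcases List.append_eq_append_iff.mp hsplit with ⟨c, hc1, hc2⟩ | ⟨c, hc1, hc2⟩
  · exact hmid c hc1 hc2
  · cases c with
    | nil => exact hmid [] (by simpa using hc1.symm) (by simpa using hc2.symm)
    | cons b c =>
      rw [List.cons_append, List.cons.injEq] at hc2
      obtain ⟨rfl, -⟩ := hc2
      exact (hdown c hc1).elim

end

end HypAuto

namespace HypAuto

/-! ### The stacking function -/

section

variable {G : Type} [Group G] {nm : G → ℕ} {D K : ℕ} {H : Subgroup G}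
  {NH NT : Set (List (Ltr nm K))} {σH σG : Type} {FH : G → σH} {FG : G → σG}
  {ψH : σH → Ltr nm K → List (Ltr nm K) × List (Ltr nm K)}
  {ψG : σG → Ltr nm K → List (Ltr nm K) × List (Ltr nm K)}

open Classical in
/-- A word with value `c`, for an element `c` of `H` or of norm at most `K`: a single letter where
possible, and the normal form of `c` otherwise. -/
noncomputable def mid (NH : Set (List (Ltr nm K))) (c : G) : List (Ltr nm K) :=
  if h1 : c = 1 then [] else if hK : nm c ≤ K then [⟨c, h1, hK⟩] else
    if hu : ∃ u ∈ NH, ev u = c then hu.choose else []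

/-- The detour replacing the letter `a`: down along the first suffix, across, and up along the
second. -/
noncomputable def detour (hi : ∀ g, nm g⁻¹ = nm g) (NH : Set (List (Ltr nm K)))
    (p : List (Ltr nm K) × List (Ltr nm K)) (a : Ltr nm K) : List (Ltr nm K) :=
  (p.1.map (linv hi)).reverse ++ mid NH (ev p.1 * a.1 * (ev p.2)⁻¹) ++ p.2

/-- The states at which the letter `a` traverses an edge of the tree of normal forms. -/
def Deg (hi : ∀ g, nm g⁻¹ = nm g) {τ : Type} (N : Set (List (Ltr nm K))) (F : G → τ) (s : τ)
    (a : Ltr nm K) : Prop :=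
  ∃ y ∈ N, F (ev y) = s ∧ (y ++ [a] ∈ N ∨ ∃ y', y = y' ++ [linv hi a])

open Classical in
/-- The suffixes used at a given state: those of the tree of `H` for edges inside `H`, and those of
the tree of cosets for all other edges. -/
noncomputable def sel (H : Subgroup G)
    (ψH : σH → Ltr nm K → List (Ltr nm K) × List (Ltr nm K))
    (ψG : σG → Ltr nm K → List (Ltr nm K) × List (Ltr nm K)) (s : σG × Option σH) (a : Ltr nm K) :
    List (Ltr nm K) × List (Ltr nm K) :=
  s.2.elim (ψG s.1 a) fun t => if a.1 ∈ H then ψH t a else ψG s.1 a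

open Classical in
/-- The stacking function, as a function of the state of the normal form and of the letter. -/
noncomputable def stackFn (hi : ∀ g, nm g⁻¹ = nm g) (H : Subgroup G)
    (NH NT : Set (List (Ltr nm K))) (FH : G → σH) (FG : G → σG)
    (ψH : σH → Ltr nm K → List (Ltr nm K) × List (Ltr nm K))
    (ψG : σG → Ltr nm K → List (Ltr nm K) × List (Ltr nm K)) (s : σG × Option σH) (a : Ltr nm K) :
    List (Ltr nm K) :=
  if Deg hi (cat NH NT) (stF H FH FG) s a then [a] else detour hi NH (sel H ψH ψG s a) a

/-- The length of the second factor of the normal form of an element. -/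
noncomputable def vlen (NH NT : Set (List (Ltr nm K))) (g : G) : ℕ :=
  sInf {n | ∃ u ∈ NH, ∃ v ∈ NT, ev (u ++ v) = g ∧ v.length = n}

open Classical in
/-- The complexity of an edge: edges inside `H` come before all others, which are ordered by the
distance of their origin to `H` in the tree of normal forms; ties are broken by the length of the
normal form. -/
noncomputable def cpx (H : Subgroup G) (NH NT : Set (List (Ltr nm K))) (y : List (Ltr nm K))
    (a : Ltr nm K) : ℕ ×ₗ ℕ :=
  toLex (if ev y ∈ H ∧ a.1 ∈ H then 0 else 1 + vlen NH NT (ev y), y.length)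

lemma vlen_eq (TH : Tree nm K ⊥ H NH FH ψH) (TG : Tree nm K H ⊤ NT FG ψG)
    {u v : List (Ltr nm K)} (hu : u ∈ NH) (hv : v ∈ NT) :
    vlen NH NT (ev (u ++ v)) = v.length := by
  have : {n | ∃ u' ∈ NH, ∃ v' ∈ NT, ev (u' ++ v') = ev (u ++ v) ∧ v'.length = n} =
      {v.length} := by
    ext n
    constructor
    · rintro ⟨u', hu', v', hv', h1, rfl⟩
      rw [(cat_uniq' TH TG hu' hv' hu hv h1).2]
      rfl
    · rintro rfl
      exact ⟨u, hu, v, hv, rfl, rfl⟩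
  rw [vlen, this, csInf_singleton]

lemma mid_small {c : G} (hc : nm c ≤ K) :
    ev (mid NH c) = c ∧ ∀ m₁ a' m₂, mid NH c = m₁ ++ a' :: m₂ → m₁ = [] ∧ a'.1 = c := by
  by_cases h1 : c = 1
  · rw [mid, dif_pos h1]
    exact ⟨h1.symm, fun m₁ a' m₂ h => by simp at h⟩
  · rw [mid, dif_neg h1, dif_pos hc]
    refine ⟨wordVal_single _ _, fun m₁ a' m₂ h => ?_⟩
    cases m₁ with
    | nil =>
      rw [List.nil_append, List.cons.injEq] at h
      exact ⟨rfl, by rw [← h.1]⟩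
    | cons b m₁ => simp at h

lemma mid_one : mid NH (1 : G) = [] := by rw [mid, dif_pos rfl]

lemma mid_mem (TH : Tree nm K ⊥ H NH FH ψH) {c : G} (hc : c ∈ H) :
    ev (mid NH c) = c ∧ ∀ b ∈ mid NH c, b.1 ∈ H := by
  by_cases h1 : c = 1
  · rw [mid, dif_pos h1]
    exact ⟨h1.symm, by simp⟩
  · by_cases hK : nm c ≤ K
    · rw [mid, dif_neg h1, dif_pos hK]
      refine ⟨wordVal_single _ _, ?_⟩
      simpa using hc
    · have hu := TH.exH hc
      rw [mid, dif_neg h1, dif_neg hK, dif_pos hu]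
      exact ⟨hu.choose_spec.2, TH.mem _ hu.choose_spec.1⟩

lemma deg_iff (hi : ∀ g, nm g⁻¹ = nm g) (TH : Tree nm K ⊥ H NH FH ψH)
    (TG : Tree nm K H ⊤ NT FG ψG) {y : List (Ltr nm K)} (hy : y ∈ cat NH NT) (a : Ltr nm K) :
    Deg hi (cat NH NT) (stF H FH FG) (stF H FH FG (ev y)) a ↔
      (y ++ [a] ∈ cat NH NT ∨ ∃ y', y = y' ++ [linv hi a]) := by
  constructor
  · rintro ⟨z, hz, hF, h | ⟨z', h⟩⟩
    · exact Or.inl (cat_auto TH TG z hz y hy hF a h).1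
    · exact Or.inr (cat_ends TH TG z hz y hy hF z' _ h)
  · exact fun h => ⟨y, hy, rfl, h⟩

lemma linv_mem (hi : ∀ g, nm g⁻¹ = nm g) {a : Ltr nm K} : (linv hi a).1 ∈ H ↔ a.1 ∈ H :=
  H.inv_mem_iff

/-- Away from the edges inside `H`, the stacking function depends only on the second factor of the
normal form. -/
lemma stackFn_outside (hi : ∀ g, nm g⁻¹ = nm g) (TH : Tree nm K ⊥ H NH FH ψH)
    (TG : Tree nm K H ⊤ NT FG ψG) {u v : List (Ltr nm K)} (hu : u ∈ NH) (hv : v ∈ NT)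
    {a : Ltr nm K} (ha : ¬ (ev (u ++ v) ∈ H ∧ a.1 ∈ H)) :
    (Deg hi (cat NH NT) (stF H FH FG) (stF H FH FG (ev (u ++ v))) a ↔
      (v ++ [a] ∈ NT ∨ ∃ v', v = v' ++ [linv hi a])) ∧
    sel H ψH ψG (stF H FH FG (ev (u ++ v))) a = ψG (FG (ev v)) a := by
  rw [deg_iff hi TH TG ⟨u, hu, v, hv, rfl⟩, cat_append TH TG hu hv]
  rw [cat_mem_iff TH TG hu hv] at ha
  refine ⟨or_congr ⟨?_, Or.inl⟩ ⟨?_, ?_⟩, ?_⟩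
  · rintro (h | ⟨rfl, h⟩)
    · exact h
    · exact (ha ⟨rfl, TH.mem _ h a (by simp)⟩).elim
  · rintro ⟨y', h⟩
    rcases List.eq_nil_or_concat v with rfl | ⟨v', b, rfl⟩
    · rw [List.append_nil] at h
      exact (ha ⟨rfl, (linv_mem hi).mp (TH.mem _ hu _ (by simp [h]))⟩).elim
    · rw [List.concat_eq_append, ← List.append_assoc] at h
      obtain ⟨-, h2⟩ := List.append_inj' h rfl
      exact ⟨v', by rw [List.concat_eq_append, h2]⟩
  · rintro ⟨v', rfl⟩
    exact ⟨u ++ v', by simp⟩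
  · by_cases hH : ev (u ++ v) ∈ H
    · have ha' : a.1 ∉ H := fun h => ha ⟨(cat_mem_iff TH TG hu hv).mp hH, h⟩
      simp [sel, stF, if_pos hH, if_neg ha', TH.FG_eq TG hu]
    · simp [sel, stF, if_neg hH, TH.FG_eq TG hu]

/-- The geometry of the detours. -/
lemma detour_spec (hi : ∀ g, nm g⁻¹ = nm g) (TH : Tree nm K ⊥ H NH FH ψH)
    (TG : Tree nm K H ⊤ NT FG ψG) {y : List (Ltr nm K)} (hy : y ∈ cat NH NT) (a : Ltr nm K) :
    ∃ X s X' s', y = X ++ s ∧ X' ++ s' ∈ cat NH NT ∧ ev (X' ++ s') = ev y * a.1 ∧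
      sel H ψH ψG (stF H FH FG (ev y)) a = (s, s') ∧
      ev (mid NH (ev s * a.1 * (ev s')⁻¹)) = ev s * a.1 * (ev s')⁻¹ ∧
      (ev y ∈ H → a.1 ∈ H → ∀ b ∈ s ++ mid NH (ev s * a.1 * (ev s')⁻¹) ++ s', b.1 ∈ H) ∧
      ∀ m₁ a' m₂ y', mid NH (ev s * a.1 * (ev s')⁻¹) = m₁ ++ a' :: m₂ → y' ∈ cat NH NT →
        ev y' = ev X * ev m₁ → cpx H NH NT y' a' < cpx H NH NT y a := by
  obtain ⟨u, hu, v, hv, rfl⟩ := hy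
  by_cases hb : ev (u ++ v) ∈ H ∧ a.1 ∈ H
  · obtain ⟨hH, ha⟩ := hb
    have hv0 := (cat_mem_iff TH TG hu hv).mp hH
    subst hv0
    rw [List.append_nil] at *
    obtain ⟨u', hu', hev⟩ := TH.exH (H.mul_mem hH ha)
    obtain ⟨x, x', h1, h2, h3⟩ := TH.psi u hu u' hu' a ha (by rw [hev]; simp)
    have hsel : sel H ψH ψG (stF H FH FG (ev u)) a = ψH (FH (ev u)) a := by
      simp [sel, stF, if_pos hH, if_pos ha]
    rw [hsel]
    clear hsel
    generalize ψH (FH (ev u)) a = p at h1 h2 h3 ⊢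
    obtain ⟨s, s'⟩ := p
    dsimp only at h1 h2 h3
    have hsH : ∀ b ∈ s, b.1 ∈ H := fun b hb => TH.mem u hu b (by simp [h1, hb])
    have hsH' : ∀ b ∈ s', b.1 ∈ H := fun b hb => TH.mem u' hu' b (by simp [h2, hb])
    obtain ⟨c, hc⟩ : ∃ c, c = ev s * a.1 * (ev s')⁻¹ := ⟨_, rfl⟩
    have hcH : c ∈ H := by
      rw [hc]
      exact H.mul_mem (H.mul_mem (ev_mem hsH) ha) (H.inv_mem (ev_mem hsH'))
    obtain ⟨hm1, hm2⟩ := mid_mem TH hcH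
    refine ⟨x, s, x', s', h1, ⟨u', hu', [], TG.nil, by rw [← h2, List.append_nil]⟩,
      by rw [← h2, hev], rfl, by rw [← hc, hm1], fun _ _ b hb => ?_, ?_⟩
    · rw [← hc, List.mem_append, List.mem_append] at hb
      rcases hb with (hb | hb) | hb
      · exact hsH b hb
      · exact hm2 b hb
      · exact hsH' b hb
    · rw [← hc]
      intro m₁ a' m₂ y' hsplit hy' hevy
      rcases h3 with ⟨hs, hcK⟩ | ⟨rfl, rfl⟩
      · rw [← hc] at hcK
        obtain ⟨rfl, ha'⟩ := (mid_small hcK).2 _ _ _ hsplit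
        have hxN : x ∈ NH := TH.pre u hu x ⟨s, h1.symm⟩
        have hyx : y' = x := cat_uniq TH TG hy' ⟨x, hxN, [], TG.nil, by simp⟩
          (by rw [hevy]; exact mul_one _)
        subst hyx
        have hlen : y'.length < u.length := by
          rw [h1, List.length_append]
          have := List.length_pos_of_ne_nil hs
          omega
        rw [cpx, cpx, if_pos ⟨TH.evH hxN, ha' ▸ hcH⟩, if_pos ⟨hH, ha⟩, Prod.Lex.toLex_lt_toLex]
        exact Or.inr ⟨rfl, hlen⟩
      · -- the suffixes exhaust the two normal forms, so there is no middle part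
        rw [List.nil_append] at h1 h2
        have : c = 1 := by rw [hc, ← h1, ← h2, hev]; group
        rw [this, mid_one] at hsplit
        simp at hsplit
  · obtain ⟨u', hu', v', hv', hev⟩ := cat_ex TH TG (ev (u ++ v) * a.1)
    have hcos : ev v * a.1 * (ev v')⁻¹ ∈ H := by
      have : ev v * a.1 * (ev v')⁻¹ = (ev u)⁻¹ * ev u' := by
        rw [ev_append, ev_append] at hev
        have h2 : a.1 = (ev u * ev v)⁻¹ * (ev u' * ev v') := by rw [hev]; group
        rw [h2]
        group
      rw [this]
      exact H.mul_mem (H.inv_mem (TH.evH hu)) (TH.evH hu')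
    obtain ⟨x, x', h1, h2, h3⟩ := TG.psi v hv v' hv' a trivial hcos
    rw [(stackFn_outside hi TH TG hu hv hb).2]
    generalize ψG (FG (ev v)) a = p at h1 h2 h3 ⊢
    obtain ⟨s, s'⟩ := p
    dsimp only at h1 h2 h3
    obtain ⟨c, hc⟩ : ∃ c, c = ev s * a.1 * (ev s')⁻¹ := ⟨_, rfl⟩
    have hN' : u' ++ x' ++ s' ∈ cat NH NT := ⟨u', hu', v', hv', by rw [h2, List.append_assoc]⟩
    refine ⟨u ++ x, s, u' ++ x', s', by rw [h1, List.append_assoc], hN',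
      by rw [List.append_assoc, ← h2, hev], rfl, ?_, fun h h' => (hb ⟨h, h'⟩).elim, ?_⟩
    · rw [← hc]
      rcases h3 with ⟨hs, hcK⟩ | ⟨rfl, rfl⟩
      · exact (mid_small (hc ▸ hcK)).1
      · rw [List.nil_append] at h1 h2
        exact (mid_mem TH (by rw [hc, ← h1, ← h2]; exact hcos)).1
    · rw [← hc]
      intro m₁ a' m₂ y' hsplit hy' hevy
      rw [cpx, cpx, if_neg hb, vlen_eq TH TG hu hv, Prod.Lex.toLex_lt_toLex]
      refine Or.inl ?_
      rcases h3 with ⟨hs, hcK⟩ | ⟨rfl, rfl⟩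
      · rw [← hc] at hcK
        obtain ⟨rfl, ha'⟩ := (mid_small hcK).2 _ _ _ hsplit
        have hxN : x ∈ NT := TG.pre v hv x ⟨s, h1.symm⟩
        have hyx : y' = u ++ x := cat_uniq TH TG hy' ⟨u, hu, x, hxN, rfl⟩
          (by rw [hevy]; exact mul_one _)
        rw [hyx, vlen_eq TH TG hu hxN]
        have hlen : x.length < v.length := by
          rw [h1, List.length_append]
          have := List.length_pos_of_ne_nil hs
          omega
        dsimp only
        split <;> omega
      · rw [List.nil_append] at h1 h2
        have hcH : c ∈ H := by rw [hc, ← h1, ← h2]; exact hcos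
        have hmem := (mid_mem TH hcH).2
        rw [hsplit] at hmem
        rw [if_pos]
        · dsimp only; omega
        · refine ⟨?_, hmem a' (by simp)⟩
          rw [hevy, List.append_nil]
          exact H.mul_mem (TH.evH hu) (ev_mem fun b hb => hmem b (by simp [hb]))

end

end HypAuto

namespace HypAuto

/-! ### The autostackable structure -/

section

variable {G : Type} [Group G] {nm : G → ℕ} {D K : ℕ} {H : Subgroup G}
  {NH NT : Set (List (Ltr nm K))} {σH σG : Type} {FH : G → σH} {FG : G → σG}
  {ψH : σH → Ltr nm K → List (Ltr nm K) × List (Ltr nm K)}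
  {ψG : σG → Ltr nm K → List (Ltr nm K) × List (Ltr nm K)}

lemma stackFn_val (hi : ∀ g, nm g⁻¹ = nm g) (TH : Tree nm K ⊥ H NH FH ψH)
    (TG : Tree nm K H ⊤ NT FG ψG) {y : List (Ltr nm K)} (hy : y ∈ cat NH NT) (a : Ltr nm K) :
    ev (stackFn hi H NH NT FH FG ψH ψG (stF H FH FG (ev y)) a) = a.1 := by
  rw [stackFn]
  split
  · exact wordVal_single _ _
  · obtain ⟨X, s, X', s', -, -, -, hsel, hm, -⟩ := detour_spec (ψH := ψH) hi TH TG hy a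
    rw [hsel, detour, ev_append, ev_append, hm, ev_inv]
    group

lemma stackFn_mem (hi : ∀ g, nm g⁻¹ = nm g) (TH : Tree nm K ⊥ H NH FH ψH)
    (TG : Tree nm K H ⊤ NT FG ψG) {y : List (Ltr nm K)} (hy : y ∈ cat NH NT) (hH : ev y ∈ H)
    {a : Ltr nm K} (ha : a.1 ∈ H) :
    ∀ b ∈ stackFn hi H NH NT FH FG ψH ψG (stF H FH FG (ev y)) a, b.1 ∈ H := by
  rw [stackFn]
  split
  · simpa using ha
  · obtain ⟨X, s, X', s', -, -, -, hsel, -, hb, -⟩ := detour_spec (ψH := ψH) hi TH TG hy a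
    have hb := hb hH ha
    rw [hsel, detour]
    intro b hbm
    rw [List.mem_append, List.mem_append] at hbm
    rcases hbm with (h | h) | h
    · rw [List.mem_reverse, List.mem_map] at h
      obtain ⟨b', hb', rfl⟩ := h
      exact (linv_mem hi).mpr (hb b' (by simp [hb']))
    · exact hb b (List.mem_append_left _ (List.mem_append_right _ h))
    · exact hb b (List.mem_append_right _ h)

/-- Complexity decreases along the edges, outside the tree of normal forms, of the path labelled by
a value of the stacking function. -/
lemma stackFn_lt (hi : ∀ g, nm g⁻¹ = nm g) (TH : Tree nm K ⊥ H NH FH ψH)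
    (TG : Tree nm K H ⊤ NT FG ψG) {y y' u u' : List (Ltr nm K)} {a a' : Ltr nm K}
    (hy : y ∈ cat NH NT) (hd : ¬ (y ++ [a] ∈ cat NH NT ∨ ∃ z, y = z ++ [linv hi a]))
    (hu : stackFn hi H NH NT FH FG ψH ψG (stF H FH FG (ev y)) a = u ++ a' :: u')
    (hy' : y' ∈ cat NH NT) (hev : ev y' = ev (y ++ u))
    (hd' : ¬ (y' ++ [a'] ∈ cat NH NT ∨ ∃ z, y' = z ++ [linv hi a'])) :
    cpx H NH NT y' a' < cpx H NH NT y a := by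
  obtain ⟨X, s, X', s', hX, hX', hevX, hsel, hm, -, hlt⟩ := detour_spec (ψH := ψH) hi TH TG hy a
  rw [stackFn, if_neg (by rwa [deg_iff hi TH TG hy]), hsel, detour] at hu
  rw [not_or] at hd'
  obtain ⟨m₁, m₂, h1, h2⟩ := path_cases hi TH TG (hX ▸ hy) hX' (by rw [hevX, hX]) hm hu hy'
    (by rw [hev, ev_append, hX]) hd'.1 hd'.2
  exact hlt m₁ a' m₂ y' h1 hy' h2

/-- Trees of normal forms for `H` and for the cosets of `H` combine to an autostackable structure
respecting `H`. -/
theorem autostackable_of_trees (h : HypNorm nm D) [Finite σH] [Finite σG]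
    (TH : Tree nm K ⊥ H NH FH ψH) (TG : Tree nm K H ⊤ NT FG ψG) :
    H.FG ∧ AutostackableRespecting G H := by
  classical
  have hfin : Finite (Ltr nm K) := ((h.fin K).subset fun g hg => hg.2).to_subtype
  have := Fintype.ofFinite (Ltr nm K)
  have hi := h.inv
  let Φ := stackFn hi H NH NT FH FG ψH ψG
  let F := stF H FH FG
  obtain ⟨Kst, hKst⟩ : ∃ Kst, ∀ s a, (Φ s a).length ≤ Kst := by
    obtain ⟨b, hb⟩ := (Set.finite_range fun p : (σG × Option σH) × Ltr nm K =>
      (Φ p.1 p.2).length).bddAbove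
    exact ⟨b, fun s a => hb ⟨(s, a), rfl⟩⟩
  let st : StackingData (Ltr nm K) := ⟨cat NH NT, Kst, fun y a => Φ (F (ev y)) a⟩
  have hclH : Subgroup.closure ((Subtype.val : Ltr nm K → G) '' {b | b.1 ∈ H}) = H := by
    refine le_antisymm ?_ fun g hg => ?_
    · rw [Subgroup.closure_le]
      rintro _ ⟨b, hb, rfl⟩
      exact hb
    · obtain ⟨u, hu, rfl⟩ := TH.exH hg
      exact ev_mem fun b hb => Subgroup.subset_closure ⟨b, TH.mem u hu b hb, rfl⟩
  refine ⟨⟨((Set.toFinite ((Subtype.val : Ltr nm K → G) '' {b | b.1 ∈ H})).toFinset), ?_⟩, ?_⟩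
  · rw [Set.Finite.coe_toFinset, hclH]
  have hreg : ∀ X : Set (σG × Option σH), IsRegularLang {w | w ∈ cat NH NT ∧ F (ev w) ∈ X} :=
    isRegularLang_of_state (cat_pre TH TG) (fun w => F (ev w)) (cat_auto TH TG)
  refine ⟨Ltr nm K, inferInstance, Subtype.val, linv hi, st, ?_, ⟨?_, ?_⟩, ?_⟩
  · refine ⟨⟨fun a => a.2.1, fun a => Subtype.ext (inv_inv a.1), fun a => rfl, ?_⟩, ?_,
      cat_pre TH TG, fun y hy a => ⟨stackFn_val hi TH TG hy a, hKst _ _⟩, ?_, ?_⟩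
    · rw [eq_top_iff]
      intro g _
      obtain ⟨u, -, v, -, rfl⟩ := cat_ex TH TG g
      exact ev_mem fun b _ => Subgroup.subset_closure ⟨b, rfl⟩
    · intro g
      obtain ⟨u, hu, v, hv, hg⟩ := cat_ex TH TG g
      exact ⟨u ++ v, ⟨⟨u, hu, v, hv, rfl⟩, hg⟩, fun w hw =>
        cat_uniq TH TG hw.1 ⟨u, hu, v, hv, rfl⟩ (hw.2.trans hg.symm)⟩
    · intro y hy a hd
      exact if_pos ((deg_iff hi TH TG hy a).mpr hd)
    · rintro ⟨seq, hseq⟩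
      obtain ⟨n, hn⟩ := WellFounded.not_rel_apply_succ (r := ((· < ·) : ℕ ×ₗ ℕ → ℕ ×ₗ ℕ → Prop))
        fun i => cpx H NH NT (seq i).1 (seq i).2
      obtain ⟨h1, h2, h3, u, u', h4, h5, h6⟩ := hseq n
      obtain ⟨-, h8, h9, -⟩ := hseq (n + 1)
      exact hn (stackFn_lt hi TH TG h1 (not_or.mpr ⟨h2, h3⟩) h4 h5 h6 (not_or.mpr ⟨h8, h9⟩))
  · have := hreg Set.univ
    simpa using this
  · exact syncRegular_graph hreg Φ fun y _ a => rfl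
  · refine ⟨{b | b.1 ∈ H}, fun b hb => (linv_mem hi).mpr hb, fun b hb => hb, hclH, NH, NT,
      fun w hw b hb => TH.mem w hw b hb, TH.pre, ?_, TG.pre, ?_, rfl, ?_, ?_⟩
    · intro g hg
      obtain ⟨u, hu, rfl⟩ := TH.exH hg
      exact ⟨u, ⟨hu, rfl⟩, fun w hw => TH.uniqH hw.1 hu hw.2⟩
    · intro g
      obtain ⟨v, hv, hvg⟩ := TG.ex g trivial
      refine ⟨v, ⟨hv, hvg⟩, fun w hw => TG.uniq w hw.1 v hv ?_⟩
      have := H.mul_mem hw.2 (H.inv_mem hvg)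
      rwa [show wordVal Subtype.val w * g⁻¹ * (ev v * g⁻¹)⁻¹ = ev w * (ev v)⁻¹ by group] at this
    · intro y hy hH b hb c hc
      exact stackFn_mem hi TH TG hy hH hb c hc
    · rintro a _ ⟨u, hu, v, hv, rfl⟩ _ ⟨u', hu', v', hv', rfl⟩ ha ⟨k, hk, he⟩
      have hvv : v' = v := cat_coset TH TG hu' hv' hu hv (by
        change ev (u' ++ v') = k * ev (u ++ v) at he
        rw [he, mul_inv_cancel_right]
        exact hk)
      subst hvv
      have ha : ¬ (ev (u ++ v') ∈ H ∧ a.1 ∈ H) := ha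
      have ha' : ¬ (ev (u' ++ v') ∈ H ∧ a.1 ∈ H) := by
        rwa [cat_mem_iff TH TG hu' hv', ← cat_mem_iff TH TG hu hv]
      obtain ⟨h1, h2⟩ := stackFn_outside (ψH := ψH) hi TH TG hu hv ha
      obtain ⟨h1', h2'⟩ := stackFn_outside (ψH := ψH) hi TH TG hu' hv' ha'
      change stackFn hi H NH NT FH FG ψH ψG (stF H FH FG (ev (u' ++ v'))) a =
        stackFn hi H NH NT FH FG ψH ψG (stF H FH FG (ev (u ++ v'))) a
      rw [stackFn, stackFn, h2, h2']
      simp only [h1, h1']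

theorem autostackable_of_qc (h : HypNorm nm D) (H : Subgroup G) {ε : ℕ}
    (hq : QC nm (H : Set G) ε) : H.FG ∧ AutostackableRespecting G H := by
  obtain ⟨K₁, h1⟩ := (h.level_bot H hq).exists_tree h
  obtain ⟨K₂, h2⟩ := (h.level_top H hq).exists_tree h
  obtain ⟨NH, σH, _, FH, ψH, TH⟩ := h1 (max K₁ K₂) (le_max_left _ _)
  obtain ⟨NT, σG, _, FG, ψG, TG⟩ := h2 (max K₁ K₂) (le_max_right _ _)
  exact autostackable_of_trees h TH TG

end

end HypAuto

/-- **Theorem.** Hyperbolic groups are autostackable respecting quasiconvex subgroups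
(which are in particular finitely generated); in particular a hyperbolic group is
autostackable respecting any virtually cyclic subgroup. -/
theorem hyperbolic_autostackable_respecting_quasiconvex
    {G : Type} [Group G] {α : Type} [Fintype α]
    (π : α → G) (inv : α → α) (hgen : IsInvGenSet G π inv)
    (hhyp : ∃ δ : ℝ, 0 ≤ δ ∧ ∀ w x y z : G,
      min (gromovProd π w x z) (gromovProd π w y z) - δ ≤ gromovProd π w x y) :
    (∀ H : Subgroup G,
      (∃ ε : ℕ, ∀ u : List α, u.length = wordDist π 1 (wordVal π u) →
        wordVal π u ∈ H → ∀ p : List α, p <+: u →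
          ∃ h ∈ H, wordDist π (wordVal π p) h ≤ ε) →
      H.FG ∧ AutostackableRespecting G H) ∧
    (∀ H : Subgroup G,
      (∃ C : Subgroup ↥H, IsCyclic ↥C ∧ C.FiniteIndex) →
      AutostackableRespecting G H) := by
  obtain ⟨D, h⟩ := HypAuto.hypNorm_of_words hgen hhyp
  refine ⟨fun H ⟨ε, hε⟩ => HypAuto.autostackable_of_qc h H (HypAuto.qc_of_words hgen H hε),
    fun H hH => ?_⟩
  obtain ⟨ε, hε⟩ := h.vcyc_qc H hH
  exact (HypAuto.autostackable_of_qc h H hε).2
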